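/- arXiv:1309.3223 — 4 statements merged into one kernel-verified Lean document; each statement's English description precedes it below -/
import Mathlib

section
/- Let G=(V,E) be a finite weighted graph, k ≥ 1 a real number, and B ⊆ P ⊆ V with B nonempty. If e(P∖B, B) ≥ e(P∖B, V)/k, then φ(P) ≤ k·φ(B). -/
open Finset

/-- Weighted degree of a vertex. -/
noncomputable def deg {V : Type*} [Fintype V] (w : V → V → ℝ) (v : V) : ℝ :=
  ∑ u, w v u

/-- Volume of a set of vertices. -/
noncomputable def vol {V : Type*} [Fintype V] (w : V → V → ℝ) (S : Finset V) : ℝ :=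
  ∑ v ∈ S, deg w v

/-- Total weight of edges from `S` to `T \ S`. -/
noncomputable def eW {V : Type*} [DecidableEq V] (w : V → V → ℝ) (S T : Finset V) : ℝ :=
  ∑ u ∈ S, ∑ v ∈ T \ S, w u v

/-- Conductance of `S` in `G`. -/
noncomputable def phi {V : Type*} [Fintype V] [DecidableEq V] (w : V → V → ℝ)
    (S : Finset V) : ℝ :=
  eW w S Finset.univ / vol w S

/-- Volume of `S ⊆ P` inside the induced subgraph `G[P]`. -/
noncomputable def volIn {V : Type*} [DecidableEq V] (w : V → V → ℝ) (P S : Finset V) : ℝ :=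
  ∑ v ∈ S, ∑ u ∈ P, w v u

/-- `φ(G[P]) ≥ a` : every nonempty proper `S ⊊ P` with at most half of the induced volume
has induced conductance at least `a` (stated multiplicatively). -/
def inCondGE {V : Type*} [DecidableEq V] (w : V → V → ℝ) (P : Finset V) (a : ℝ) : Prop :=
  ∀ S : Finset V, S ⊆ P → S.Nonempty → S ≠ P →
    volIn w P S ≤ volIn w P P / 2 → a * volIn w P S ≤ eW w S P

/-- `ρ(k)`: the minimum over families of `k` pairwise disjoint nonempty subsets of the
maximum conductance. -/
noncomputable def rho {V : Type*} [Fintype V] [DecidableEq V] (w : V → V → ℝ) (k : ℕ) : ℝ :=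
  sInf { r | ∃ A : Fin k → Finset V, (∀ i, (A i).Nonempty) ∧
    (∀ i j, i ≠ j → Disjoint (A i) (A j)) ∧ r = ⨆ i, phi w (A i) }

/-- The normalized Laplacian `I - D^{-1/2} A D^{-1/2}`. -/
noncomputable def normLap {V : Type*} [Fintype V] [DecidableEq V] (w : V → V → ℝ) : Matrix V V ℝ :=
  1 - Matrix.of fun u v => w u v / (Real.sqrt (deg w u) * Real.sqrt (deg w v))

/-- `lam w k` is the `k`-th smallest eigenvalue (1-indexed) of the normalized Laplacian. -/
noncomputable def lam {V : Type*} [Fintype V] [DecidableEq V] (w : V → V → ℝ) (k : ℕ) : ℝ :=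
  if h : (normLap w).IsHermitian then
    ((Finset.univ.val.map h.eigenvalues).sort (· ≤ ·)).getD (k - 1) 0
  else 0


theorem stmt10 {V : Type*} [Fintype V] [DecidableEq V] (w : V → V → ℝ)
    (hsym : ∀ u v, w u v = w v u) (hnonneg : ∀ u v, 0 ≤ w u v)
    (hdeg : ∀ v, 0 < deg w v)
    (k : ℝ) (hk : 1 ≤ k)
    (B P : Finset V) (hBP : B ⊆ P) (hBne : B.Nonempty)
    (h : eW w (P \ B) Finset.univ / k ≤ eW w (P \ B) B) :
    phi w P ≤ k * phi w B := by
  have hk0 : 0 < k := by linarith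
  -- the three pieces B, Q = P \ B, C = V \ P
  have s1 : (Finset.univ \ B : Finset V) = (P \ B) ∪ (Finset.univ \ P) := by
    ext x
    have := @hBP x
    simp only [mem_sdiff, mem_univ, mem_union, true_and]
    tauto
  have s2 : (Finset.univ \ (P \ B) : Finset V) = B ∪ (Finset.univ \ P) := by
    ext x
    have := @hBP x
    simp only [mem_sdiff, mem_univ, mem_union, true_and]
    tauto
  have s3 : B \ (P \ B) = B := by
    ext x
    simp only [mem_sdiff]
    tauto
  have d1 : Disjoint (P \ B) (Finset.univ \ P) := by
    rw [Finset.disjoint_left]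
    intro x
    simp only [mem_sdiff, mem_univ, true_and]
    tauto
  have d2 : Disjoint B (Finset.univ \ P) := by
    rw [Finset.disjoint_left]
    intro x
    have := @hBP x
    simp only [mem_sdiff, mem_univ, true_and]
    tauto
  have eB : eW w B Finset.univ
      = ∑ u ∈ B, ∑ v ∈ P \ B, w u v + ∑ u ∈ B, ∑ v ∈ Finset.univ \ P, w u v := by
    unfold eW
    rw [s1, ← Finset.sum_add_distrib]
    exact Finset.sum_congr rfl fun u _ => Finset.sum_union d1
  have eQ : eW w (P \ B) Finset.univ
      = ∑ u ∈ P \ B, ∑ v ∈ B, w u v + ∑ u ∈ P \ B, ∑ v ∈ Finset.univ \ P, w u v := by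
    unfold eW
    rw [s2, ← Finset.sum_add_distrib]
    exact Finset.sum_congr rfl fun u _ => Finset.sum_union d2
  have eQB : eW w (P \ B) B = ∑ u ∈ P \ B, ∑ v ∈ B, w u v := by
    unfold eW
    rw [s3]
  have eP : eW w P Finset.univ = ∑ u ∈ P \ B, ∑ v ∈ Finset.univ \ P, w u v
      + ∑ u ∈ B, ∑ v ∈ Finset.univ \ P, w u v := by
    unfold eW
    exact (Finset.sum_sdiff hBP).symm
  have hs : ∑ u ∈ B, ∑ v ∈ P \ B, w u v = ∑ u ∈ P \ B, ∑ v ∈ B, w u v := by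
    rw [Finset.sum_comm]
    exact Finset.sum_congr rfl fun u _ => Finset.sum_congr rfl fun v _ => hsym v u
  have nn : ∀ S T : Finset V, 0 ≤ ∑ u ∈ S, ∑ v ∈ T, w u v := fun S T =>
    Finset.sum_nonneg fun u _ => Finset.sum_nonneg fun v _ => hnonneg u v
  have ha := nn (P \ B) B
  have hb := nn B (Finset.univ \ P)
  have hq := nn (P \ B) (Finset.univ \ P)
  rw [div_le_iff₀ hk0, eQ, eQB] at h
  have volB : 0 < vol w B := Finset.sum_pos (fun v _ => hdeg v) hBne
  have volBP : vol w B ≤ vol w P :=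
    Finset.sum_le_sum_of_subset_of_nonneg hBP fun v _ _ => (hdeg v).le
  have key : eW w P Finset.univ ≤ k * eW w B Finset.univ := by
    rw [eP, eB, hs]
    nlinarith [mul_nonneg (sub_nonneg.2 hk) hb]
  have nP : 0 ≤ eW w P Finset.univ := nn _ _
  unfold phi
  rw [← mul_div_assoc]
  exact div_le_div₀ (nP.trans key) key volB volBP
end

section
/- Let G=(V,E) be a finite weighted graph, k ≥ 1 a real number, 0 < ε < 1, ρ > 0, and B ⊆ P ⊆ V. Let S be a nonempty subset of P, and define S_B = S∩B, T_B = B∖S, and S_P = S∖B. Assume vol(S_B) ≤ vol(B)/2 and: (1) if S_P ≠ ∅ then φ(S_P) ≥ ρ and e(S_P, P) ≥ e(S_P, V)/k; (2) if S_B ≠ ∅ then max{φ(S_B), φ(T_B)} ≥ ρ, e(S_B,B)·vol(B) ≥ (ε/3)·vol(T_B)·e(S_B,V∖B), and e(T_B,B)·vol(B) ≥ (ε/3)·vol(S_B)·e(T_B,V∖B). Then e(S,P)/vol(S) ≥ ε·ρ/(14k); in particular the conductance of S inside the induced subgraph G[P] is at least ε·ρ/(14k). -/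
open Finset

theorem aux_mono {V : Type*} (w : V → V → ℝ) (hn : ∀ u v, 0 ≤ w u v)
    {A A' C C' : Finset V} (hA : A ⊆ A') (hC : C ⊆ C') :
    ∑ u ∈ A, ∑ v ∈ C, w u v ≤ ∑ u ∈ A', ∑ v ∈ C', w u v := by
  calc ∑ u ∈ A, ∑ v ∈ C, w u v ≤ ∑ u ∈ A, ∑ v ∈ C', w u v :=
        Finset.sum_le_sum fun u _ =>
          Finset.sum_le_sum_of_subset_of_nonneg hC fun v _ _ => hn u v
    _ ≤ _ := Finset.sum_le_sum_of_subset_of_nonneg hA fun u _ _ =>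
          Finset.sum_nonneg fun v _ => hn u v

theorem aux_split {V : Type*} [Fintype V] [DecidableEq V] (w : V → V → ℝ) (X B : Finset V) :
    eW w X Finset.univ = eW w X B + eW w X (Finset.univ \ B) := by
  unfold eW
  rw [← Finset.sum_add_distrib]
  refine Finset.sum_congr rfl fun u _ => ?_
  rw [← Finset.sum_union]
  · congr 1
    ext v
    simp only [Finset.mem_sdiff, Finset.mem_union, Finset.mem_univ]
    tauto
  · rw [Finset.disjoint_left]
    intro v
    simp only [Finset.mem_sdiff, Finset.mem_univ]
    tauto

theorem aux_nonneg {V : Type*} [DecidableEq V] (w : V → V → ℝ) (hn : ∀ u v, 0 ≤ w u v)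
    (X Y : Finset V) : 0 ≤ eW w X Y :=
  Finset.sum_nonneg fun u _ => Finset.sum_nonneg fun v _ => hn u v

theorem aux_inner {V : Type*} [Fintype V] [DecidableEq V] (w : V → V → ℝ)
    (hsym : ∀ u v, w u v = w v u) (hnonneg : ∀ u v, 0 ≤ w u v) (hdeg : ∀ v, 0 < deg w v)
    (k : ℝ) (hk : 1 ≤ k) (ε : ℝ) (hε0 : 0 < ε) (hε1 : ε < 1) (ρ : ℝ) (hρ : 0 < ρ)
    (B P S : Finset V) (hBP : B ⊆ P) (hSP : S ⊆ P)
    (hvol : vol w (S ∩ B) ≤ vol w B / 2)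
    (h1 : (S \ B).Nonempty →
      ρ ≤ phi w (S \ B) ∧ eW w (S \ B) Finset.univ / k ≤ eW w (S \ B) P)
    (h2 : (S ∩ B).Nonempty →
      ρ ≤ max (phi w (S ∩ B)) (phi w (B \ S)) ∧
      ε / 3 * vol w (B \ S) * eW w (S ∩ B) (Finset.univ \ B) ≤ eW w (S ∩ B) B * vol w B ∧
      ε / 3 * vol w (S ∩ B) * eW w (B \ S) (Finset.univ \ B) ≤ eW w (B \ S) B * vol w B) :
    ε * ρ / (14 * k) * vol w S ≤ eW w S P := by
  have hk0 : 0 < k := by linarith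
  have volnn : ∀ X : Finset V, 0 ≤ vol w X := fun X => Finset.sum_nonneg fun v _ => (hdeg v).le
  have volpos : ∀ X : Finset V, X.Nonempty → 0 < vol w X := fun X h =>
    Finset.sum_pos (fun v _ => hdeg v) h
  have hvS : vol w S = vol w (S ∩ B) + vol w (S \ B) :=
    (Finset.sum_inter_add_sum_sdiff S B _).symm
  have hvB : vol w B = vol w (S ∩ B) + vol w (B \ S) := by
    rw [Finset.inter_comm]
    exact (Finset.sum_inter_add_sum_sdiff B S _).symm
  have hxE : eW w (S ∩ B) B ≤ eW w S P := by
    refine aux_mono w hnonneg Finset.inter_subset_left ?_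
    intro v
    have := @hBP v
    simp only [Finset.mem_sdiff, Finset.mem_inter]
    tauto
  have hTx : eW w (B \ S) B = eW w (S ∩ B) B := by
    unfold eW
    rw [Finset.sum_comm]
    have e1 : B \ (B \ S) = S ∩ B := by
      ext v
      simp only [Finset.mem_sdiff, Finset.mem_inter]
      tauto
    have e2 : B \ (S ∩ B) = B \ S := by
      ext v
      simp only [Finset.mem_sdiff, Finset.mem_inter]
      tauto
    rw [e1, e2]
    exact Finset.sum_congr rfl fun u _ => Finset.sum_congr rfl fun v _ => hsym v u
  -- edges between the two parts of S
  obtain ⟨y, hy⟩ : ∃ y, y = ∑ u ∈ S \ B, ∑ v ∈ S ∩ B, w u v := ⟨_, rfl⟩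
  have hyo : y ≤ eW w (S ∩ B) (Finset.univ \ B) := by
    rw [hy, Finset.sum_comm]
    calc ∑ v ∈ S ∩ B, ∑ u ∈ S \ B, w u v = ∑ v ∈ S ∩ B, ∑ u ∈ S \ B, w v u :=
          Finset.sum_congr rfl fun u _ => Finset.sum_congr rfl fun v _ => hsym v u
      _ ≤ _ := by
          refine aux_mono w hnonneg subset_rfl ?_
          intro v
          simp only [Finset.mem_sdiff, Finset.mem_inter, Finset.mem_univ]
          tauto
  have hPE : eW w (S \ B) P ≤ eW w S P + y := by
    have : eW w (S \ B) P = (∑ u ∈ S \ B, ∑ v ∈ P \ S, w u v) + y := by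
      rw [hy]
      unfold eW
      rw [← Finset.sum_add_distrib]
      refine Finset.sum_congr rfl fun u _ => ?_
      rw [← Finset.sum_union]
      · congr 1
        ext v
        have := @hSP v
        simp only [Finset.mem_sdiff, Finset.mem_union, Finset.mem_inter]
        tauto
      · rw [Finset.disjoint_left]
        intro v
        simp only [Finset.mem_sdiff, Finset.mem_inter]
        tauto
    rw [this]
    have := aux_mono w hnonneg (Finset.sdiff_subset : S \ B ⊆ S) (subset_rfl : P \ S ⊆ P \ S)
    unfold eW
    linarith
  have hE0 := aux_nonneg w hnonneg S P
  have hx0 := aux_nonneg w hnonneg (S ∩ B) B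
  have ho0 := aux_nonneg w hnonneg (S ∩ B) (Finset.univ \ B)
  have hSs := aux_split w (S ∩ B) B
  have hTs := aux_split w (B \ S) B
  -- key bounds on the B-side
  have key : ε * ρ * vol w (S ∩ B) ≤ 7 * eW w (S ∩ B) B ∧ ε * y ≤ 6 * eW w (S ∩ B) B := by
    rcases (S ∩ B).eq_empty_or_nonempty with he | hne
    · rw [hy, he]
      simp [vol, eW]
    · obtain ⟨hm, ha, hb⟩ := h2 hne
      have hapos := volpos _ hne
      have htn := volnn (B \ S)
      rw [hTx] at hb hTs
      unfold phi at hm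
      rw [hSs, hTs] at hm
      rw [hvB] at ha hb hvol
      generalize vol w (S ∩ B) = a at *
      generalize vol w (B \ S) = t at *
      generalize eW w (S ∩ B) B = x at *
      generalize eW w (S ∩ B) (Finset.univ \ B) = o at *
      generalize eW w (B \ S) (Finset.univ \ B) = r at *
      have hat : a ≤ t := by linarith
      have htp : 0 < t := by linarith
      have hox : ε * o ≤ 6 * x := by
        have : t * (ε * o) ≤ t * (6 * x) := by nlinarith
        exact le_of_mul_le_mul_left this htp
      refine ⟨?_, by nlinarith⟩
      rcases le_max_iff.1 hm with h | h
      · rw [le_div_iff₀ hapos] at h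
        nlinarith
      · rw [le_div_iff₀ htp] at h
        have h3 : ε * a * (ρ * t) ≤ ε * a * (x + r) :=
          mul_le_mul_of_nonneg_left h (by positivity)
        have h4 : ε * (a * x) ≤ a * x := by
          have : 0 ≤ a * x := by positivity
          nlinarith
        have h5 : a * x ≤ t * x := mul_le_mul_of_nonneg_right hat hx0
        have : t * (ε * ρ * a) ≤ t * (7 * x) := by nlinarith
        exact le_of_mul_le_mul_left this htp
  have key2 : ρ * vol w (S \ B) ≤ k * eW w (S \ B) P := by
    rcases (S \ B).eq_empty_or_nonempty with he | hne
    · rw [he]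
      simp [vol, eW]
    · obtain ⟨hm, ha⟩ := h1 hne
      unfold phi at hm
      rw [le_div_iff₀ (volpos _ hne)] at hm
      rw [div_le_iff₀ hk0] at ha
      linarith
  obtain ⟨k1, k3⟩ := key
  have hpn := volnn (S \ B)
  rw [hvS, div_mul_eq_mul_div, div_le_iff₀ (by positivity)]
  generalize eW w S P = E at *
  generalize eW w (S ∩ B) B = x at *
  generalize eW w (S \ B) P = F at *
  generalize vol w (S ∩ B) = a at *
  generalize vol w (S \ B) = p at *
  have q1 : ε * F ≤ 7 * E := by nlinarith
  have q2 : ε * (ρ * p) ≤ k * (7 * E) := by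
    calc ε * (ρ * p) ≤ ε * (k * F) := mul_le_mul_of_nonneg_left key2 hε0.le
      _ = k * (ε * F) := by ring
      _ ≤ _ := mul_le_mul_of_nonneg_left q1 hk0.le
  have q3 : E ≤ k * E := by nlinarith
  nlinarith

theorem stmt11 {V : Type*} [Fintype V] [DecidableEq V] (w : V → V → ℝ)
    (hsym : ∀ u v, w u v = w v u) (hnonneg : ∀ u v, 0 ≤ w u v)
    (hdeg : ∀ v, 0 < deg w v)
    (k : ℝ) (hk : 1 ≤ k) (ε : ℝ) (hε0 : 0 < ε) (hε1 : ε < 1)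
    (ρ : ℝ) (hρ : 0 < ρ)
    (B P S : Finset V) (hBP : B ⊆ P) (hSP : S ⊆ P) (hSne : S.Nonempty)
    (hvol : vol w (S ∩ B) ≤ vol w B / 2)
    (h1 : (S \ B).Nonempty →
      ρ ≤ phi w (S \ B) ∧ eW w (S \ B) Finset.univ / k ≤ eW w (S \ B) P)
    (h2 : (S ∩ B).Nonempty →
      ρ ≤ max (phi w (S ∩ B)) (phi w (B \ S)) ∧
      ε / 3 * vol w (B \ S) * eW w (S ∩ B) (Finset.univ \ B) ≤ eW w (S ∩ B) B * vol w B ∧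
      ε / 3 * vol w (S ∩ B) * eW w (B \ S) (Finset.univ \ B) ≤ eW w (B \ S) B * vol w B) :
    ε * ρ / (14 * k) ≤ eW w S P / vol w S ∧
    ε * ρ / (14 * k) * volIn w P S ≤ eW w S P := by
  have main := aux_inner w hsym hnonneg hdeg k hk ε hε0 hε1 ρ hρ B P S hBP hSP hvol h1 h2
  have hpos : 0 < vol w S := Finset.sum_pos (fun v _ => hdeg v) hSne
  refine ⟨(le_div_iff₀ hpos).2 main, le_trans ?_ main⟩
  refine mul_le_mul_of_nonneg_left ?_ (by positivity)
  exact aux_mono w hnonneg subset_rfl (Finset.subset_univ P)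
end

section
/- Let G=(V,E) be a finite weighted graph, k ≥ 1 an integer, and B_1,…,B_k pairwise disjoint nonempty subsets of V. Then there exists a partition of V into sets P_1,…,P_k such that B_i ⊆ P_i for every i, and for every 1 ≤ i ≤ k and every subset S ⊆ P_i∖B_i, e(S, P_i) ≥ e(S, V)/k. -/
open Finset

theorem stmt12 {V : Type*} [Fintype V] [DecidableEq V] (w : V → V → ℝ)
    (hsym : ∀ u v, w u v = w v u) (hnonneg : ∀ u v, 0 ≤ w u v)
    (hdeg : ∀ v, 0 < deg w v)
    (k : ℕ) (hk : 1 ≤ k) (B : Fin k → Finset V)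
    (hne : ∀ i, (B i).Nonempty) (hdisj : ∀ i j, i ≠ j → Disjoint (B i) (B j)) :
    ∃ P : Fin k → Finset V,
      (∀ i j, i ≠ j → Disjoint (P i) (P j)) ∧
      (∀ v : V, ∃ i, v ∈ P i) ∧
      (∀ i, B i ⊆ P i) ∧
      (∀ i, ∀ S : Finset V, S ⊆ P i \ B i →
        eW w S Finset.univ / (k : ℝ) ≤ eW w S (P i)) := by
  classical
  -- colourings extending the prescribed one, maximizing the uncut weight
  let F : (V → Fin k) → ℝ := fun c => ∑ u, ∑ v, if c u = c v then w u v else 0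
  let C : Finset (V → Fin k) := univ.filter fun c => ∀ i, ∀ v ∈ B i, c v = i
  have hC : C.Nonempty := by
    refine ⟨fun v => if h : ∃ i, v ∈ B i then h.choose else ⟨0, hk⟩, ?_⟩
    simp only [C, mem_filter, mem_univ, true_and]
    intro i v hv
    have h : ∃ i, v ∈ B i := ⟨i, hv⟩
    rw [dif_pos h]
    by_contra hne'
    exact Finset.disjoint_left.mp (hdisj _ _ hne') h.choose_spec hv
  obtain ⟨c, hcC, hmax⟩ := C.exists_max_image F hC
  have hcB : ∀ i, ∀ v ∈ B i, c v = i := by simpa [C] using hcC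
  refine ⟨fun i => univ.filter fun v => c v = i, ?_, ?_, ?_, ?_⟩
  · intro i j hij
    rw [Finset.disjoint_left]
    intro v hv hv'
    simp only [mem_filter, mem_univ, true_and] at hv hv'
    exact hij (hv.symm.trans hv')
  · intro v
    exact ⟨c v, by simp⟩
  · intro i v hv
    simpa using hcB i v hv
  · intro i S hS
    have hSi : ∀ u ∈ S, c u = i ∧ u ∉ B i := by
      intro u hu
      simpa using hS hu
    have heW : ∀ j, eW w S (univ.filter fun v => c v = j)
        = ∑ u, ∑ v, if u ∈ S ∧ v ∉ S ∧ c v = j then w u v else 0 := by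
      intro j
      unfold eW
      rw [← Finset.sum_filter_add_sum_filter_not univ (fun u => u ∈ S)
        (fun u => ∑ v, if u ∈ S ∧ v ∉ S ∧ c v = j then w u v else 0)]
      have h2 : ∑ u ∈ univ.filter (fun u => u ∉ S),
          (∑ v, if u ∈ S ∧ v ∉ S ∧ c v = j then w u v else 0) = 0 := by
        apply Finset.sum_eq_zero
        intro u hu
        have hu' : u ∉ S := by simpa using hu
        simp [hu']
      rw [h2, add_zero, Finset.filter_univ_mem]
      apply Finset.sum_congr rfl
      intro u hu
      rw [← Finset.sum_filter]
      apply Finset.sum_congr _ (fun _ _ => rfl)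
      ext v
      simp [hu, and_comm]
    have key : ∀ j, eW w S (univ.filter fun v => c v = j)
        ≤ eW w S (univ.filter fun v => c v = i) := by
      intro j
      let c' : V → Fin k := fun v => if v ∈ S then j else c v
      have hc' : c' ∈ C := by
        simp only [C, mem_filter, mem_univ, true_and]
        intro l v hv
        have hvS : v ∉ S := by
          intro hvS
          have h1 := hSi v hvS
          have h2 := hcB l v hv
          apply h1.2
          rw [← h1.1, h2]
          exact hv
        simp [c', hvS, hcB l v hv]
      have hle := hmax c' hc'
      let a : Fin k → V → V → ℝ := fun j u v => if u ∈ S ∧ v ∉ S ∧ c v = j then w u v else 0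
      have hpt : ∀ u v, (if c' u = c' v then w u v else 0) + (a i u v + a i v u)
          = (if c u = c v then w u v else 0) + (a j u v + a j v u) := by
        intro u v
        by_cases hu : u ∈ S <;> by_cases hv : v ∈ S
        · simp [a, c', hu, hv, (hSi u hu).1, (hSi v hv).1]
        · simp [a, c', hu, hv, (hSi u hu).1, eq_comm, add_comm]
        · simp [a, c', hu, hv, (hSi v hv).1, hsym v u, add_comm]
        · simp [a, c', hu, hv]
      have hsum : F c' + (∑ u, ∑ v, a i u v + ∑ u, ∑ v, a i v u)
          = F c + (∑ u, ∑ v, a j u v + ∑ u, ∑ v, a j v u) := by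
        simp only [F, ← Finset.sum_add_distrib]
        exact Finset.sum_congr rfl fun u _ => Finset.sum_congr rfl fun v _ => hpt u v
      rw [Finset.sum_comm (f := fun u v => a i v u),
        Finset.sum_comm (f := fun u v => a j v u)] at hsum
      rw [heW, heW]
      change ∑ u, ∑ v, a j u v ≤ ∑ u, ∑ v, a i u v
      linarith
    have htot : eW w S univ = ∑ j, eW w S (univ.filter fun v => c v = j) := by
      unfold eW
      rw [Finset.sum_comm (s := (univ : Finset (Fin k)))]
      apply Finset.sum_congr rfl
      intro u _
      rw [← Finset.sum_fiberwise (univ \ S) c]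
      apply Finset.sum_congr rfl
      intro j _
      apply Finset.sum_congr _ (fun _ _ => rfl)
      ext v
      simp [and_comm]
    have hkpos : (0 : ℝ) < k := by exact_mod_cast hk
    rw [div_le_iff₀ hkpos, htot]
    calc _ ≤ ∑ _j : Fin k, eW w S (univ.filter fun v => c v = i) :=
          Finset.sum_le_sum fun j _ => key j
      _ = _ := by simp [mul_comm]
end

section
/- There is a universal constant C > 0 such that the following holds. Let G=(V,E) be a finite weighted graph and k ≥ 2 an integer with λ_k > 0. Then there exists an integer ℓ with 1 ≤ ℓ < k and a partition of V into nonempty sets P_1,…,P_ℓ such that for every 1 ≤ i ≤ ℓ: φ(G[P_i]) ≥ λ_k²/(78400·k⁴) and φ_G(P_i) ≤ C·k⁶·√λ_{k−1}. -/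
open Finset

namespace S13

set_option linter.unusedSectionVars false
set_option linter.unusedSimpArgs false

variable {V : Type} [Fintype V] [DecidableEq V]

/-- total weight between two sets -/
noncomputable def W (w : V → V → ℝ) (S T : Finset V) : ℝ := ∑ u ∈ S, ∑ v ∈ T, w u v

lemma W_union_right (w : V → V → ℝ) (S : Finset V) {T T' : Finset V} (h : Disjoint T T') :
    W w S (T ∪ T') = W w S T + W w S T' := by
  unfold W
  rw [← Finset.sum_add_distrib]
  exact Finset.sum_congr rfl fun u _ => Finset.sum_union h

lemma W_union_left (w : V → V → ℝ) (S : Finset V) {T T' : Finset V} (h : Disjoint T T') :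
    W w (T ∪ T') S = W w T S + W w T' S := by
  unfold W
  exact Finset.sum_union h

lemma W_comm {w : V → V → ℝ} (hs : ∀ u v, w u v = w v u) (S T : Finset V) :
    W w S T = W w T S := by
  unfold W
  rw [Finset.sum_comm]
  exact Finset.sum_congr rfl fun u _ => Finset.sum_congr rfl fun v _ => hs _ _

lemma W_nonneg {w : V → V → ℝ} (h0 : ∀ u v, 0 ≤ w u v) (S T : Finset V) : 0 ≤ W w S T :=
  Finset.sum_nonneg fun u _ => Finset.sum_nonneg fun v _ => h0 u v

lemma W_mono_right {w : V → V → ℝ} (h0 : ∀ u v, 0 ≤ w u v) (S : Finset V) {T T' : Finset V}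
    (h : T ⊆ T') : W w S T ≤ W w S T' :=
  Finset.sum_le_sum fun u _ => Finset.sum_le_sum_of_subset_of_nonneg h fun v _ _ => h0 u v

lemma W_mono_left {w : V → V → ℝ} (h0 : ∀ u v, 0 ≤ w u v) (S : Finset V) {T T' : Finset V}
    (h : T ⊆ T') : W w T S ≤ W w T' S :=
  Finset.sum_le_sum_of_subset_of_nonneg h fun v _ _ => Finset.sum_nonneg fun u _ => h0 v u

lemma vol_eq_W (w : V → V → ℝ) (S : Finset V) : vol w S = W w S univ := rfl

lemma eW_eq_W (w : V → V → ℝ) (S T : Finset V) : eW w S T = W w S (T \ S) := rfl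

lemma volIn_eq_W (w : V → V → ℝ) (P S : Finset V) : volIn w P S = W w S P := rfl

lemma vol_pos {w : V → V → ℝ} (hd : ∀ v, 0 < deg w v) {S : Finset V} (h : S.Nonempty) :
    0 < vol w S := Finset.sum_pos (fun v _ => hd v) h

/-- `m` disjoint nonempty sets of conductance at most `r`. -/
def Good (w : V → V → ℝ) (m : ℕ) (r : ℝ) (A : Fin m → Finset V) : Prop :=
  (∀ i, (A i).Nonempty) ∧ (∀ i j, i ≠ j → Disjoint (A i) (A j)) ∧
    ∀ i, W w (A i) (A i)ᶜ ≤ r * vol w (A i)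

def Q (w : V → V → ℝ) (m : ℕ) (r : ℝ) : Prop := ∃ A : Fin m → Finset V, Good w m r A

lemma Q_mono_left {w : V → V → ℝ} {m n : ℕ} (h : m ≤ n) {r : ℝ} (hQ : Q w n r) : Q w m r := by
  obtain ⟨A, h1, h2, h3⟩ := hQ
  refine ⟨fun i => A (Fin.castLE h i), fun i => h1 _, fun i j hij => h2 _ _ ?_, fun i => h3 _⟩
  exact fun h' => hij (Fin.castLE_injective h h')

lemma not_Q_succ {w : V → V → ℝ} {m : ℕ} {r : ℝ} (hN : ¬ Q w (m + 1) r)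
    (A : Fin m → Finset V) (h1 : ∀ i, (A i).Nonempty) (h2 : ∀ i j, i ≠ j → Disjoint (A i) (A j))
    (B : Finset V) (hB : B.Nonempty) (hd : ∀ i, Disjoint (A i) B) :
    (∃ i, r * vol w (A i) < W w (A i) (A i)ᶜ) ∨ r * vol w B < W w B Bᶜ := by
  by_contra! hcon
  refine hN ⟨Fin.cons B A, ?_, ?_, ?_⟩
  · intro i; refine Fin.cases ?_ (fun i => ?_) i <;> simp [hB, h1]
  · intro i j
    refine Fin.cases ?_ (fun i => ?_) i <;> refine Fin.cases ?_ (fun j => ?_) j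
    · simp
    · intro _; simpa using (hd j).symm
    · intro _; simpa using hd i
    · intro hij; simpa using h2 i j (fun h => hij (by rw [h]))
  · intro i; refine Fin.cases ?_ (fun i => ?_) i
    · simpa using hcon.2
    · simpa using hcon.1 i

/-- swapping step -/
lemma split_step {w : V → V → ℝ} (hs : ∀ u v, w u v = w v u)
    {X Y : Finset V} (hXY : Disjoint X Y) {σ ρ α : ℝ} (hα : 2 * α ≤ ρ - σ)
    (hv : 0 ≤ vol w X)
    (hA : W w (X ∪ Y) (X ∪ Y)ᶜ ≤ σ * vol w (X ∪ Y)) (hX : ρ * vol w X < W w X Xᶜ)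
    (hc : W w X Y ≤ α * vol w X) : W w Y Yᶜ ≤ σ * vol w Y := by
  have e1 : Xᶜ = Y ∪ (X ∪ Y)ᶜ := by
    ext v; have := fun h : v ∈ X => Finset.disjoint_left.1 hXY h; simp; tauto
  have e2 : Yᶜ = X ∪ (X ∪ Y)ᶜ := by
    ext v; have := fun h : v ∈ X => Finset.disjoint_left.1 hXY h; simp; tauto
  have d1 : Disjoint Y (X ∪ Y)ᶜ := by
    rw [Finset.disjoint_left]; intro v; simp; tauto
  have d2 : Disjoint X (X ∪ Y)ᶜ := by
    rw [Finset.disjoint_left]; intro v; simp; tauto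
  rw [e1, W_union_right _ _ d1] at hX
  rw [e2, W_union_right _ _ d2]
  rw [W_union_left _ _ hXY, vol_eq_W, W_union_left _ _ hXY, ← vol_eq_W, ← vol_eq_W] at hA
  rw [W_comm hs Y X]
  nlinarith

lemma core {w : V → V → ℝ} (hs : ∀ u v, w u v = w v u) (hd : ∀ v, 0 < deg w v)
    {ℓ : ℕ} {σ ρ α : ℝ} (hα0 : 0 ≤ α) (hα : 2 * α ≤ ρ - σ)
    (hQ : Q w ℓ σ) (hN : ¬ Q w (ℓ + 1) ρ) :
    ∃ A : Fin ℓ → Finset V, Good w ℓ σ A ∧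
      ∀ i, ∀ S ⊆ A i, vol w S ≤ vol w (A i \ S) → α * vol w S ≤ W w S (A i \ S) := by
  classical
  have hex : ∃ n, ∃ A : Fin ℓ → Finset V, Good w ℓ σ A ∧ ∑ i, (A i).card = n := by
    obtain ⟨A, hA⟩ := hQ
    exact ⟨_, A, hA, rfl⟩
  obtain ⟨A, hA, hcard⟩ := Nat.find_spec hex
  refine ⟨A, hA, ?_⟩
  intro i S hS hvol
  by_contra! hc
  have hSne : S.Nonempty := by
    by_contra hne
    rw [Finset.not_nonempty_iff_eq_empty] at hne
    subst hne
    simp [W, vol] at hc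
  have hvS := vol_pos hd hSne
  have hS'ne : (A i \ S).Nonempty := by
    by_contra hne
    rw [Finset.not_nonempty_iff_eq_empty] at hne
    rw [hne] at hvol
    simp [vol] at hvol hvS
    linarith
  have hvS' := vol_pos hd hS'ne
  obtain ⟨h1, h2, h3⟩ := hA
  -- replacing `A i` by a proper subset is impossible
  have key : ∀ Y ⊆ A i, Y.Nonempty → Y ≠ A i → ¬ (W w Y Yᶜ ≤ σ * vol w Y) := by
    intro Y hY hYne hYA hYσ
    have hlt : ∑ j, (Function.update A i Y j).card < Nat.find hex := by
      rw [← hcard]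
      apply Finset.sum_lt_sum
      · intro j _
        by_cases hj : j = i
        · subst hj; simpa using Finset.card_le_card hY
        · simp [hj]
      · refine ⟨i, Finset.mem_univ _, ?_⟩
        simpa using Finset.card_lt_card (hY.ssubset_of_ne hYA)
    refine Nat.find_min hex hlt ⟨Function.update A i Y, ⟨?_, ?_, ?_⟩, rfl⟩
    · intro j
      by_cases hj : j = i
      · subst hj; simpa using hYne
      · simpa [hj] using h1 j
    · intro a b hab
      by_cases ha : a = i
      · subst ha
        have hb : b ≠ a := fun h => hab h.symm
        simpa [hb] using Finset.disjoint_of_subset_left hY (h2 a b hab)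
      · by_cases hb : b = i
        · subst hb
          simpa [ha] using Finset.disjoint_of_subset_right hY (h2 a b hab)
        · simpa [ha, hb] using h2 a b hab
    · intro j
      by_cases hj : j = i
      · subst hj; simpa using hYσ
      · simpa [hj] using h3 j
  have hun : S ∪ A i \ S = A i := Finset.union_sdiff_of_subset hS
  have hun' : A i \ S ∪ S = A i := Finset.sdiff_union_of_subset hS
  have hdj : Disjoint S (A i \ S) := Finset.disjoint_sdiff
  -- apply the gap
  have hor : ρ * vol w S < W w S Sᶜ ∨ ρ * vol w (A i \ S) < W w (A i \ S) (A i \ S)ᶜ := by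
    have := not_Q_succ hN (Function.update A i S) ?_ ?_ (A i \ S) hS'ne ?_
    · rcases this with ⟨j, hj⟩ | h
      · by_cases hji : j = i
        · subst hji; left; simpa using hj
        · exfalso
          simp only [ne_eq, hji, not_false_eq_true, Function.update_of_ne] at hj
          have := h3 j
          have hv := vol_pos hd (h1 j)
          nlinarith
      · right; exact h
    · intro j
      by_cases hj : j = i
      · subst hj; simpa using hSne
      · simpa [hj] using h1 j
    · intro a b hab
      by_cases ha : a = i
      · subst ha
        have hb : b ≠ a := fun h => hab h.symm
        simpa [hb] using Finset.disjoint_of_subset_left hS (h2 a b hab)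
      · by_cases hb : b = i
        · subst hb
          simpa [ha] using Finset.disjoint_of_subset_right hS (h2 a b hab)
        · simpa [ha, hb] using h2 a b hab
    · intro j
      by_cases hj : j = i
      · subst hj; simpa using hdj
      · simpa [hj] using Finset.disjoint_of_subset_right Finset.sdiff_subset (h2 j i hj)
  rcases hor with h | h
  · refine key (A i \ S) Finset.sdiff_subset hS'ne ?_ (split_step hs hdj hα hvS.le ?_ h hc.le)
    · intro he
      obtain ⟨v, hv⟩ := hSne
      have := hS hv
      rw [← he] at this
      exact (Finset.mem_sdiff.1 this).2 hv
    · rw [hun]; exact h3 i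
  · refine key S hS hSne ?_ (split_step hs hdj.symm hα hvS'.le ?_ h ?_)
    · rintro rfl; simp at hS'ne
    · rw [hun']; exact h3 i
    · rw [W_comm hs]
      exact hc.le.trans (mul_le_mul_of_nonneg_left hvol hα0)

/-- extension of disjoint sets to a partition -/
lemma extend {w : V → V → ℝ} (hs : ∀ u v, w u v = w v u) 
    {ℓ : ℕ} (hℓ : 1 ≤ ℓ) (A : Fin ℓ → Finset V) (h2 : ∀ i j, i ≠ j → Disjoint (A i) (A j)) :
    ∃ c : V → Fin ℓ, (∀ i, ∀ v ∈ A i, c v = i) ∧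
      ∀ i j, i ≠ j → ∀ S : Finset V, (∀ v ∈ S, c v = i ∧ v ∉ A i) →
        W w S (univ.filter (fun v => c v = j)) ≤ W w S (univ.filter (fun v => c v = i) \ S) := by
  classical
  let F : Finset (V → Fin ℓ) := univ.filter (fun c => ∀ i, ∀ v ∈ A i, c v = i)
  let cost : (V → Fin ℓ) → ℝ := fun c => ∑ u, ∑ v, if c u = c v then 0 else w u v
  have hF : F.Nonempty := by
    refine ⟨fun v => if h : ∃ i, v ∈ A i then h.choose else ⟨0, hℓ⟩, ?_⟩
    simp only [F, Finset.mem_filter, Finset.mem_univ, true_and]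
    intro i v hv
    have h : ∃ i, v ∈ A i := ⟨i, hv⟩
    rw [dif_pos h]
    by_contra hne
    exact Finset.disjoint_left.1 (h2 _ _ hne) h.choose_spec hv
  obtain ⟨c, hcF, hmin⟩ := Finset.exists_min_image F cost hF
  have hc : ∀ i, ∀ v ∈ A i, c v = i := by simpa [F] using hcF
  refine ⟨c, hc, ?_⟩
  intro i j hij S hS
  let c' : V → Fin ℓ := fun v => if v ∈ S then j else c v
  have hc'F : c' ∈ F := by
    simp only [F, Finset.mem_filter, Finset.mem_univ, true_and]
    intro a v hv
    have : v ∉ S := by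
      intro hvS
      have h1 := hS v hvS
      have h3 := hc a v hv
      rw [h1.1] at h3
      subst h3
      exact h1.2 hv
    simp [c', this, hc a v hv]
  have hle := hmin c' hc'F
  let T := univ.filter (fun v => c v = i) \ S
  let U := univ.filter (fun v => c v = j)
  have hW : ∀ X Y : Finset V, W w X Y = ∑ u, ∑ v, if (u ∈ X ∧ v ∈ Y) then w u v else 0 := by
    intro X Y
    unfold W
    rw [← Finset.sum_subset (Finset.subset_univ X)]
    · refine Finset.sum_congr rfl fun u hu => ?_
      simp [hu]
    · intro u _ hu
      simp [hu]
  have hdiff : cost c' = cost c + W w S T + W w T S - W w S U - W w U S := by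
    simp only [hW, cost]
    rw [← Finset.sum_add_distrib, ← Finset.sum_add_distrib, ← Finset.sum_sub_distrib,
      ← Finset.sum_sub_distrib]
    refine Finset.sum_congr rfl fun u _ => ?_
    rw [← Finset.sum_add_distrib, ← Finset.sum_add_distrib, ← Finset.sum_sub_distrib,
      ← Finset.sum_sub_distrib]
    refine Finset.sum_congr rfl fun v _ => ?_
    have hu := hS u
    have hv := hS v
    simp only [c', T, U, Finset.mem_sdiff, Finset.mem_filter, Finset.mem_univ, true_and]
    by_cases huS : u ∈ S <;> by_cases hvS : v ∈ S
    · simp [huS, hvS, (hu huS).1, (hv hvS).1, hij]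
    · simp only [huS, hvS, (hu huS).1, hij, if_true, if_false, true_and, not_false_eq_true,
        and_true, false_and, and_false, not_true_eq_false, eq_comm (a := j), eq_comm (a := i)]
      by_cases h1 : c v = j
      · have : c v ≠ i := fun h => hij (h.symm.trans h1)
        simp [h1, hij.symm]
      · by_cases h2 : c v = i <;> simp [h1, h2, hij]
    · simp only [huS, hvS, (hv hvS).1, hij, if_true, if_false, true_and, not_false_eq_true,
        and_true, false_and, and_false, not_true_eq_false]
      by_cases h1 : c u = j
      · have : c u ≠ i := fun h => hij (h.symm.trans h1)
        simp [h1, hij.symm]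
      · by_cases h2 : c u = i <;> simp [h1, h2, hij]
    · simp [huS, hvS]
  rw [W_comm hs T S, W_comm hs U S] at hdiff
  show W w S U ≤ W w S T
  linarith

lemma partition_thm {w : V → V → ℝ} (hs : ∀ u v, w u v = w v u) (h0 : ∀ u v, 0 ≤ w u v)
    (hd : ∀ v, 0 < deg w v) {ℓ : ℕ} (hℓ : 1 ≤ ℓ) {σ ρ α : ℝ} (hα0 : 0 ≤ α) (hα1 : α ≤ 1)
    (hρ0 : 0 ≤ ρ) (hρ1 : ρ ≤ 1)
    (hα : 2 * α ≤ ρ - σ) (hQ : Q w ℓ σ) (hN : ¬ Q w (ℓ + 1) ρ) :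
    ∃ P : Fin ℓ → Finset V, (∀ i, (P i).Nonempty) ∧
      (∀ i j, i ≠ j → Disjoint (P i) (P j)) ∧ (∀ v : V, ∃ i, v ∈ P i) ∧
      ∀ i, inCondGE w (P i) (α * ρ / (3 * ℓ)) ∧ phi w (P i) ≤ ℓ * σ := by
  classical
  obtain ⟨A, ⟨h1, h2, h3⟩, hcore⟩ := core hs hd hα0 hα hQ hN
  obtain ⟨c, hcA, hmove⟩ := extend hs hℓ A h2
  have hℓ' : (1 : ℝ) ≤ ℓ := by exact_mod_cast hℓ
  set P : Fin ℓ → Finset V := fun i => univ.filter (fun v => c v = i) with hP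
  have hAP : ∀ i, A i ⊆ P i := fun i v hv => by simp [P, hcA i v hv]
  have hbound : ∀ i, ∀ S : Finset V, (∀ v ∈ S, c v = i ∧ v ∉ A i) →
      W w S Sᶜ ≤ ℓ * W w S (P i \ S) := by
    intro i S hS
    have e : W w S Sᶜ = ∑ j, W w S (Sᶜ.filter (fun v => c v = j)) := by
      unfold W
      conv_rhs => rw [Finset.sum_comm]
      refine Finset.sum_congr rfl fun u _ => ?_
      exact (Finset.sum_fiberwise _ _ _).symm
    rw [e]
    calc _ ≤ ∑ j : Fin ℓ, W w S (P i \ S) := by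
            refine Finset.sum_le_sum fun j _ => ?_
            by_cases hj : i = j
            · subst hj
              apply W_mono_right h0
              intro v; simp [P]; tauto
            · refine le_trans (W_mono_right h0 _ ?_) (hmove i j hj S hS)
              intro v; simp
      _ = _ := by simp
  refine ⟨P, fun i => (h1 i).mono (hAP i), ?_, ?_, ?_⟩
  · intro i j hij
    rw [Finset.disjoint_left]
    intro v hv hv'
    simp [P] at hv hv'
    exact hij (hv.symm.trans hv')
  · intro v; exact ⟨c v, by simp [P]⟩
  intro i
  constructor
  · -- inner conductance
    have main : ∀ S ⊆ P i, vol w (S ∩ A i) ≤ vol w (A i \ (S ∩ A i)) →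
        α * ρ / (3 * ℓ) * vol w S ≤ W w S (P i \ S) := by
      intro S hS hv
      set B := S ∩ A i with hB
      set T := S \ A i with hT
      have hTmem : ∀ v ∈ T, c v = i ∧ v ∉ A i := by
        intro v hv
        rw [hT, Finset.mem_sdiff] at hv
        exact ⟨by simpa [P] using hS hv.1, hv.2⟩
      have hST : S = B ∪ T := by ext v; simp [B, T]; tauto
      have hBT : Disjoint B T := by
        rw [Finset.disjoint_left]; intro v; simp [B, T]; tauto
      have hvol : vol w S = vol w B + vol w T := by
        conv_lhs => rw [hST]
        rw [vol_eq_W, W_union_left _ _ hBT]; rfl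
      have i1 : α * vol w B ≤ W w S (P i \ S) := by
        refine (hcore i B Finset.inter_subset_right hv).trans ?_
        refine (W_mono_left h0 _ (Finset.inter_subset_left (s₁ := S) (s₂ := A i))).trans ?_
        apply W_mono_right h0
        intro v; have := @hAP i v; simp [B]; tauto
      have i2 : ρ * vol w T ≤ W w T Tᶜ := by
        by_cases hne : T.Nonempty
        · have hdis : ∀ j, Disjoint (A j) T := by
            intro j
            rw [Finset.disjoint_left]
            intro v hvj hvT
            have := hTmem v hvT
            have h' := hcA j v hvj
            rw [this.1] at h'
            subst h'
            exact this.2 hvj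
          rcases not_Q_succ hN A h1 h2 T hne hdis with ⟨j, hj⟩ | h
          · exfalso
            have := h3 j
            have := vol_pos hd (h1 j)
            nlinarith
          · exact h.le
        · rw [Finset.not_nonempty_iff_eq_empty] at hne
          simp [hne, vol, W]
      have i3 := hbound i T hTmem
      have hPT : P i \ T = (P i \ S) ∪ B := by
        ext v; have := @hAP i v; have := @hS v; simp [B, T]; tauto
      have hdj : Disjoint (P i \ S) B := by
        rw [Finset.disjoint_left]; intro v; simp [B]; tauto
      rw [hPT, W_union_right _ _ hdj] at i3
      have i4 : W w T (P i \ S) ≤ W w S (P i \ S) := W_mono_left h0 _ Finset.sdiff_subset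
      have i5 : W w T B ≤ vol w B := by
        rw [W_comm hs]; exact W_mono_right h0 _ (Finset.subset_univ _)
      set x := W w S (P i \ S)
      have hx : 0 ≤ x := W_nonneg h0 _ _
      have hvB : 0 ≤ vol w B := W_nonneg h0 _ univ
      have i6 : ρ * vol w T ≤ ℓ * (x + vol w B) := by
        refine i2.trans (i3.trans ?_)
        exact mul_le_mul_of_nonneg_left (add_le_add i4 i5) (by positivity)
      rw [div_mul_eq_mul_div, div_le_iff₀ (by positivity), hvol]
      have j1 : α * (ρ * vol w T) ≤ α * (ℓ * (x + vol w B)) := mul_le_mul_of_nonneg_left i6 hα0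
      have j2 : ρ * (α * vol w B) ≤ 1 * x := mul_le_mul hρ1 i1 (by positivity) (by norm_num)
      have j3 : (ℓ : ℝ) * (α * vol w B) ≤ ℓ * x := mul_le_mul_of_nonneg_left i1 (by positivity)
      have j4 : α * (ℓ * x) ≤ 1 * (ℓ * x) := mul_le_mul_of_nonneg_right hα1 (by positivity)
      have j5 : 1 * x ≤ ℓ * x := mul_le_mul_of_nonneg_right hℓ' hx
      nlinarith
    have ha0 : 0 ≤ α * ρ / (3 * ℓ) := by positivity
    intro S hS hne hSP hhalf
    rw [eW_eq_W]
    simp only [volIn_eq_W] at hhalf ⊢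
    have hsplit : W w (P i) (P i) = W w S (P i) + W w (P i \ S) (P i) := by
      rw [← W_union_left _ _ Finset.disjoint_sdiff, Finset.union_sdiff_of_subset hS]
    rcases le_total (vol w (S ∩ A i)) (vol w (A i \ (S ∩ A i))) with h | h
    · refine le_trans ?_ (main S hS h)
      exact mul_le_mul_of_nonneg_left (W_mono_right h0 _ (Finset.subset_univ _)) ha0
    · have e1 : (P i \ S) ∩ A i = A i \ (S ∩ A i) := by
        ext v; have := @hAP i v; simp; tauto
      have e2 : A i \ (A i \ (S ∩ A i)) = S ∩ A i := by
        ext v; simp; tauto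
      have := main (P i \ S) Finset.sdiff_subset (by rw [e1, e2]; exact h)
      rw [Finset.sdiff_sdiff_eq_self hS, W_comm hs] at this
      refine le_trans (mul_le_mul_of_nonneg_left ?_ ha0) this
      have : W w (P i \ S) (P i) ≤ vol w (P i \ S) := W_mono_right h0 _ (Finset.subset_univ _)
      linarith
  · -- outer conductance
    have hvA := vol_pos hd (h1 i)
    have hvP := vol_pos hd ((h1 i).mono (hAP i))
    rw [phi, div_le_iff₀ hvP, eW_eq_W]
    change W w (P i) (P i)ᶜ ≤ _
    set T := P i \ A i with hT
    have b := hbound i T (by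
      intro v hv; rw [hT, Finset.mem_sdiff] at hv; exact ⟨by simpa [P] using hv.1, hv.2⟩)
    rw [Finset.sdiff_sdiff_eq_self (hAP i)] at b
    have e1 : Tᶜ = A i ∪ (P i)ᶜ := by
      ext v; have := @hAP i v; simp [T]; tauto
    have d1 : Disjoint (A i) (P i)ᶜ := by
      rw [Finset.disjoint_left]; intro v; have := @hAP i v; simp; tauto
    have e2 : (A i)ᶜ = T ∪ (P i)ᶜ := by
      ext v; have := @hAP i v; simp [T]; tauto
    have d2 : Disjoint T (P i)ᶜ := by
      rw [Finset.disjoint_left]; intro v; simp [T]; tauto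
    have d3 : Disjoint (A i) T := Finset.disjoint_sdiff
    have e3 : P i = A i ∪ T := (Finset.union_sdiff_of_subset (hAP i)).symm
    rw [e1, W_union_right _ _ d1] at b
    have hA := h3 i
    rw [e2, W_union_right _ _ d2] at hA
    have hPP : W w (P i) (P i)ᶜ = W w (A i) (P i)ᶜ + W w T (P i)ᶜ := by
      rw [← W_union_left _ _ d3, ← e3]
    rw [W_comm hs T (A i)] at b
    rw [hPP]
    have n1 : 0 ≤ W w (A i) T := W_nonneg h0 _ _
    have n2 : 0 ≤ W w (A i) (P i)ᶜ := W_nonneg h0 _ _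
    have hσ : 0 ≤ σ := by
      by_contra hneg
      push Not at hneg
      nlinarith
    have hv : vol w (A i) ≤ vol w (P i) := W_mono_left h0 _ (hAP i)
    have : W w (A i) (P i)ᶜ + W w T (P i)ᶜ ≤ ℓ * (σ * vol w (A i)) := by nlinarith
    refine this.trans ?_
    rw [mul_assoc]
    gcongr

open scoped Matrix

lemma sort_lemma (f : V → ℝ) : ∃ e : Fin (Fintype.card V) ≃ V, Monotone (fun i => f (e i)) ∧
    (Finset.univ.val.map f).sort (· ≤ ·) = List.ofFn (fun i => f (e i)) := by
  classical
  let e0 := (Fintype.equivFin V).symm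
  let e : Fin (Fintype.card V) ≃ V := (Tuple.sort (f ∘ e0)).trans e0
  have hm : Monotone (fun i => f (e i)) := Tuple.monotone_sort (f ∘ e0)
  refine ⟨e, hm, ?_⟩
  apply List.Perm.eq_of_pairwise' (r := (· ≤ ·)) (Multiset.pairwise_sort _ _)
  · exact (List.sortedLE_ofFn_iff.2 hm).pairwise
  · rw [← Multiset.coe_eq_coe, Multiset.sort_eq]
    have h1 : (Finset.univ : Finset V) = Finset.univ.map e.toEmbedding := by simp
    rw [h1, Finset.map_val, Multiset.map_map]
    have h2 : (Finset.univ : Finset (Fin (Fintype.card V))).val = ↑(List.finRange (Fintype.card V)) := rfl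
    rw [h2, Multiset.map_coe, List.ofFn_eq_map]
    rfl

noncomputable def energy (w : V → V → ℝ) (f : V → ℝ) : ℝ :=
  (1 / 2) * ∑ u, ∑ v, w u v * (f u - f v) ^ 2

lemma energy_nonneg {w : V → V → ℝ} (h0 : ∀ u v, 0 ≤ w u v) (f : V → ℝ) : 0 ≤ energy w f := by
  unfold energy
  have := fun u v => h0 u v
  have : 0 ≤ ∑ u, ∑ v, w u v * (f u - f v) ^ 2 :=
    Finset.sum_nonneg fun u _ => Finset.sum_nonneg fun v _ => mul_nonneg (h0 u v) (sq_nonneg _)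
  linarith

lemma energy_eq {w : V → V → ℝ} (hs : ∀ u v, w u v = w v u) (f : V → ℝ) :
    energy w f = ∑ v, deg w v * f v ^ 2 - ∑ u, ∑ v, w u v * (f u * f v) := by
  have h1 : ∑ u, ∑ v, w u v * f u ^ 2 = ∑ v, deg w v * f v ^ 2 := by
    refine Finset.sum_congr rfl fun u _ => ?_
    rw [deg, Finset.sum_mul]
  have h2 : ∑ u, ∑ v, w u v * f v ^ 2 = ∑ v, deg w v * f v ^ 2 := by
    rw [Finset.sum_comm, ← h1]
    refine Finset.sum_congr rfl fun u _ => Finset.sum_congr rfl fun v _ => ?_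
    rw [hs]
  have h3 : ∑ u, ∑ v, w u v * (f u - f v) ^ 2 = ∑ u, ∑ v, w u v * f u ^ 2
      + ∑ u, ∑ v, w u v * f v ^ 2 - 2 * ∑ u, ∑ v, w u v * (f u * f v) := by
    simp only [Finset.mul_sum, ← Finset.sum_add_distrib, ← Finset.sum_sub_distrib]
    refine Finset.sum_congr rfl fun u _ => Finset.sum_congr rfl fun v _ => ?_
    ring
  rw [energy, h3, h1, h2]; ring

lemma normLap_herm {w : V → V → ℝ} (hs : ∀ u v, w u v = w v u) : (normLap w).IsHermitian := by
  ext u v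
  simp only [normLap, Matrix.conjTranspose_apply, Matrix.sub_apply, Matrix.of_apply, star_trivial]
  rw [hs v u, mul_comm, Matrix.one_apply, Matrix.one_apply]
  simp [eq_comm]

lemma spectral {w : V → V → ℝ} (hs : ∀ u v, w u v = w v u) (hd : ∀ v, 0 < deg w v) :
    ∃ x : Fin (Fintype.card V) → V → ℝ,
      (∀ i j, ∑ v, deg w v * x i v * x j v = if i = j then 1 else 0) ∧
      (∀ f : V → ℝ, ∑ v, deg w v * f v ^ 2 = ∑ i, (∑ v, deg w v * f v * x i v) ^ 2) ∧
      (∀ f : V → ℝ, energy w f =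
        ∑ i : Fin (Fintype.card V), lam w (i + 1) * (∑ v, deg w v * f v * x i v) ^ 2) ∧
      Monotone (fun i : Fin (Fintype.card V) => lam w (i + 1)) := by
  classical
  have hH := normLap_herm hs
  obtain ⟨e, hm, hsort⟩ := sort_lemma hH.eigenvalues
  have hlam : ∀ i : Fin (Fintype.card V), lam w (i + 1) = hH.eigenvalues (e i) := by
    intro i
    rw [lam, dif_pos hH, hsort]
    simp [List.getD_eq_getElem?_getD]
  let b := hH.eigenvectorBasis
  have hsq : ∀ v, 0 < √(deg w v) := fun v => Real.sqrt_pos.2 (hd v)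
  have hss : ∀ v, √(deg w v) * √(deg w v) = deg w v := fun v => Real.mul_self_sqrt (hd v).le
  let x : Fin (Fintype.card V) → V → ℝ := fun i v => b (e i) v / √(deg w v)
  let g : (V → ℝ) → EuclideanSpace ℝ V := fun f => WithLp.toLp 2 (fun v => √(deg w v) * f v)
  have hin : ∀ f i, inner ℝ (b (e i)) (g f) = ∑ v, deg w v * f v * x i v := by
    intro f i
    rw [PiLp.inner_apply]
    refine Finset.sum_congr rfl fun v _ => ?_
    simp only [g, x, RCLike.inner_apply, conj_trivial]
    have h2 := (hsq v).ne'
    have h1 := hss v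
    generalize √(deg w v) = s at h1 h2 ⊢
    rw [← h1]
    field_simp
  have hre : ∀ F : V → ℝ, ∑ v, F v = ∑ i, F (e i) := fun F => (Equiv.sum_comp e F).symm
  refine ⟨x, ?_, ?_, ?_, ?_⟩
  · intro i j
    have := orthonormal_iff_ite.1 b.orthonormal (e i) (e j)
    simp only [e.injective.eq_iff] at this
    rw [← this, PiLp.inner_apply]
    refine Finset.sum_congr rfl fun v _ => ?_
    simp only [x, RCLike.inner_apply, conj_trivial]
    have h2 := (hsq v).ne'
    have h1 := hss v
    generalize √(deg w v) = s at h1 h2 ⊢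
    rw [← h1]
    field_simp
  · intro f
    simp only [← hin]
    rw [← hre (fun v => (inner ℝ (b v) (g f)) ^ 2), b.sum_sq_inner_right, EuclideanSpace.norm_sq_eq]
    refine Finset.sum_congr rfl fun v _ => ?_
    simp only [g, Real.norm_eq_abs, sq_abs, mul_pow, Real.sq_sqrt (hd v).le]
  · intro f
    simp only [← hin, hlam]
    rw [← hre (fun v => hH.eigenvalues v * (inner ℝ (b v) (g f)) ^ 2)]
    have key : ∀ v, hH.eigenvalues v * (inner ℝ (b v) (g f)) ^ 2
        = inner ℝ (g f) (b v) * inner ℝ (b v) (WithLp.toLp 2 (normLap w *ᵥ (g f))) := by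
      intro v
      have h1 : inner ℝ (b v) (WithLp.toLp 2 (normLap w *ᵥ (g f)))
          = hH.eigenvalues v * inner ℝ (b v) (g f) := by
        have hm := hH.mulVec_eigenvectorBasis v
        have ht : (normLap w)ᵀ = normLap w := by
          have := hH.eq
          rwa [Matrix.conjTranspose_eq_transpose_of_trivial] at this
        rw [real_inner_comm, real_inner_comm (g f)]
        rw [EuclideanSpace.inner_eq_star_dotProduct, EuclideanSpace.inner_eq_star_dotProduct]
        simp only [star_trivial]
        rw [Matrix.dotProduct_mulVec, ← Matrix.mulVec_transpose, ht]
        change normLap w *ᵥ (hH.eigenvectorBasis v) ⬝ᵥ _ = _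
        rw [hm, smul_dotProduct]
        rfl
      rw [h1, real_inner_comm (b v)]
      ring
    simp only [key]
    rw [b.sum_inner_mul_inner, energy_eq hs, PiLp.inner_apply]
    rw [← Finset.sum_sub_distrib]
    refine Finset.sum_congr rfl fun u _ => ?_
    simp only [g, normLap, Matrix.sub_mulVec, Matrix.one_mulVec, Pi.sub_apply,
      RCLike.inner_apply, conj_trivial]
    rw [sub_mul]
    congr 1
    · conv_lhs => rw [← hss u]
      ring
    · rw [Matrix.mulVec, dotProduct, Finset.sum_mul]
      refine Finset.sum_congr rfl fun v _ => ?_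
      have h1 := (hsq v).ne'
      have h2 := (hsq u).ne'
      simp only [Matrix.of_apply]
      field_simp
  · intro i j hij
    simp only [hlam]
    exact hm hij

lemma lam_pos_le_card {w : V → V → ℝ} {k : ℕ} (hk : 1 ≤ k) (h : 0 < lam w k) :
    k ≤ Fintype.card V := by
  by_contra hc
  unfold lam at h
  split_ifs at h with hH
  · rw [List.getD_eq_default] at h
    · exact lt_irrefl _ h
    · simp; omega
  · exact lt_irrefl _ h

/-- indicator -/
noncomputable def ind (A : Finset V) (v : V) : ℝ := if v ∈ A then 1 else 0

lemma sum_ind (A : Finset V) (F : V → ℝ) : ∑ v, F v * ind A v = ∑ v ∈ A, F v := by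
  simp [ind]

lemma energy_ind {w : V → V → ℝ} (hs : ∀ u v, w u v = w v u) (A : Finset V) :
    energy w (ind A) = W w A Aᶜ := by
  have hsq : ∀ v, ind A v ^ 2 = ind A v := by intro v; unfold ind; split_ifs <;> simp
  have hdj : Disjoint A Aᶜ := disjoint_compl_right
  have h1 : vol w A = W w A A + W w A Aᶜ := by
    rw [← W_union_right _ _ hdj, Finset.union_compl]; rfl
  rw [energy_eq hs]
  simp only [hsq]
  rw [sum_ind]
  have h2 : ∑ u, ∑ v, w u v * (ind A u * ind A v) = W w A A := by
    have : ∀ u, ∑ v, w u v * (ind A u * ind A v) = (∑ v ∈ A, w u v) * ind A u := by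
      intro u
      rw [← sum_ind A, Finset.sum_mul]
      exact Finset.sum_congr rfl fun v _ => by ring
    simp only [this]
    rw [sum_ind]; rfl
  rw [h2]
  change vol w A - _ = _
  linarith

lemma easy {w : V → V → ℝ} (hs : ∀ u v, w u v = w v u) (h0 : ∀ u v, 0 ≤ w u v)
    (hd : ∀ v, 0 < deg w v) {k : ℕ} (hk : k + 1 ≤ Fintype.card V) {r : ℝ}
    (hQ : Q w (k + 1) r) : lam w (k + 1) ≤ 2 * r := by
  classical
  obtain ⟨A, h1, h2, h3⟩ := hQ
  obtain ⟨x, -, hpars, hen, hmono⟩ := spectral hs hd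
  let f : (Fin (k + 1) → ℝ) → V → ℝ := fun c v => ∑ j, c j * ind (A j) v
  have hkk : k ≤ Fintype.card V := by omega
  let M : (Fin (k + 1) → ℝ) →ₗ[ℝ] (Fin k → ℝ) :=
    { toFun := fun c i => ∑ v, deg w v * f c v * x (Fin.castLE hkk i) v
      map_add' := by
        intro a b
        ext i
        simp only [f, Pi.add_apply, Finset.sum_add_distrib, add_mul, mul_add]
      map_smul' := by
        intro a b
        ext i
        simp only [f, Pi.smul_apply, smul_eq_mul, Finset.mul_sum, Finset.sum_mul, RingHom.id_apply]
        refine Finset.sum_congr rfl fun v _ => Finset.sum_congr rfl fun j _ => ?_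
        ring }
  have hker : LinearMap.ker M ≠ ⊥ := LinearMap.ker_ne_bot_of_finrank_lt (by simp)
  obtain ⟨c, hc, hc0⟩ := (Submodule.ne_bot_iff _).1 hker
  have hsq : ∀ v, f c v ^ 2 = ∑ j, c j ^ 2 * ind (A j) v := by
    intro v
    by_cases h : ∃ a, v ∈ A a
    · obtain ⟨a, ha⟩ := h
      have hi : ∀ j, ind (A j) v = if j = a then 1 else 0 := by
        intro j
        unfold ind
        by_cases hj : j = a
        · subst hj; simp [ha]
        · simp [hj, Finset.disjoint_right.1 (h2 j a hj) ha]
      simp [f, hi]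
    · push Not at h
      simp [f, ind, h]
  have hnorm : ∑ v, deg w v * f c v ^ 2 = ∑ j, c j ^ 2 * vol w (A j) := by
    simp only [hsq, Finset.mul_sum]
    rw [Finset.sum_comm]
    refine Finset.sum_congr rfl fun j _ => ?_
    rw [vol, ← sum_ind (A j), Finset.mul_sum]
    exact Finset.sum_congr rfl fun v _ => by ring
  have hpos : 0 < ∑ j, c j ^ 2 * vol w (A j) := by
    obtain ⟨a, ha⟩ := Function.ne_iff.1 hc0
    refine Finset.sum_pos' (fun j _ => mul_nonneg (sq_nonneg _) (vol_pos hd (h1 j)).le)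
      ⟨a, Finset.mem_univ _, mul_pos (by simp at ha; positivity) (vol_pos hd (h1 a))⟩
  -- lower bound
  have hlow : lam w (k + 1) * ∑ j, c j ^ 2 * vol w (A j) ≤ energy w (f c) := by
    rw [← hnorm, hpars, hen, Finset.mul_sum]
    refine Finset.sum_le_sum fun i _ => ?_
    by_cases hi : (i : ℕ) < k
    · have : ∑ v, deg w v * f c v * x i v = 0 := by
        have := congrFun (LinearMap.mem_ker.1 hc) ⟨i, hi⟩
        exact this
      rw [this]; simp
    · apply mul_le_mul_of_nonneg_right _ (sq_nonneg _)
      exact hmono (show (⟨k, by omega⟩ : Fin (Fintype.card V)) ≤ i from by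
        rw [Fin.le_def]; simp; omega)
  -- upper bound
  have hpt : ∀ u v, (f c u - f c v) ^ 2 ≤ ∑ j, 2 * c j ^ 2 * (ind (A j) u - ind (A j) v) ^ 2 := by
    intro u v
    by_cases h : ∃ a, u ∈ A a ∧ v ∈ A a
    · obtain ⟨a, hu, hv⟩ := h
      have hi : ∀ j, ind (A j) u = ind (A j) v := by
        intro j
        unfold ind
        by_cases hj : j = a
        · subst hj; simp [hu, hv]
        · simp [Finset.disjoint_right.1 (h2 j a hj) hu, Finset.disjoint_right.1 (h2 j a hj) hv]
      simp [f, hi]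
    · push Not at h
      have hj : ∀ j, 2 * c j ^ 2 * (ind (A j) u - ind (A j) v) ^ 2
          = 2 * (c j ^ 2 * ind (A j) u) + 2 * (c j ^ 2 * ind (A j) v) := by
        intro j
        have := h j
        unfold ind
        by_cases hu : u ∈ A j
        · simp [hu, this hu]
        · by_cases hv : v ∈ A j <;> simp [hu, hv]
      simp only [hj]
      rw [Finset.sum_add_distrib, ← Finset.mul_sum, ← Finset.mul_sum, ← hsq, ← hsq]
      nlinarith [sq_nonneg (f c u + f c v)]
  have hup : energy w (f c) ≤ ∑ j, 2 * c j ^ 2 * W w (A j) (A j)ᶜ := by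
    simp only [← energy_ind hs]
    unfold energy
    simp only [Finset.mul_sum]
    rw [Finset.sum_comm (γ := Fin (k + 1))]
    refine Finset.sum_le_sum fun u _ => ?_
    rw [Finset.sum_comm (γ := Fin (k + 1))]
    refine Finset.sum_le_sum fun v _ => ?_
    calc _ ≤ 1 / 2 * (w u v * ∑ j, 2 * c j ^ 2 * (ind (A j) u - ind (A j) v) ^ 2) := by
            have := mul_le_mul_of_nonneg_left (hpt u v) (h0 u v)
            linarith
      _ = _ := by
            rw [Finset.mul_sum, Finset.mul_sum]
            exact Finset.sum_congr rfl fun j _ => by ring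
  have hup2 : ∑ j, 2 * c j ^ 2 * W w (A j) (A j)ᶜ ≤ 2 * r * ∑ j, c j ^ 2 * vol w (A j) := by
    rw [Finset.mul_sum]
    refine Finset.sum_le_sum fun j _ => ?_
    have := mul_le_mul_of_nonneg_left (h3 j) (show 0 ≤ 2 * c j ^ 2 by positivity)
    linarith
  exact le_of_mul_le_mul_right (hlow.trans (hup.trans hup2)) hpos

/-- co-area inequality by induction on the support. -/
lemma coarea {w : V → V → ℝ} (hs : ∀ u v, w u v = w v u) (α : ℝ) (n : ℕ) :
    ∀ (q : V → ℝ), (∀ v, 0 ≤ q v) → (univ.filter (fun v => q v ≠ 0)).card ≤ n →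
      (∀ S : Finset V, S.Nonempty → (∀ v ∈ S, q v ≠ 0) → α * vol w S ≤ W w S Sᶜ) →
      α * ∑ v, deg w v * q v ≤ (1 / 2) * ∑ u, ∑ v, w u v * |q u - q v| := by
  induction n with
  | zero =>
    intro q hq hcard _
    have : ∀ v, q v = 0 := by
      intro v
      by_contra hv
      have h' := Finset.card_eq_zero.1 (Nat.le_zero.1 hcard)
      have : v ∈ univ.filter (fun v => q v ≠ 0) := by simp [hv]
      rw [h'] at this
      simp at this
    simp [this]
  | succ n ih =>
    intro q hq hcard hα
    set S := univ.filter (fun v => q v ≠ 0) with hS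
    by_cases hne : S.Nonempty
    · obtain ⟨a, haS, hmin⟩ := Finset.exists_min_image S q hne
      have ha0 : q a ≠ 0 := by simpa [hS] using haS
      have hapos : 0 < q a := lt_of_le_of_ne (hq a) (Ne.symm ha0)
      let q' : V → ℝ := fun v => q v - q a * ind S v
      have hq'S : ∀ v, v ∉ S → q v = 0 := by intro v hv; by_contra h; exact hv (by simp [hS, h])
      have hq' : ∀ v, 0 ≤ q' v := by
        intro v
        by_cases hv : v ∈ S
        · simpa [q', ind, hv] using hmin v hv
        · simp [q', ind, hv, hq'S v hv]
      have hsub : ∀ v, q' v ≠ 0 → q v ≠ 0 := by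
        intro v h1 h2
        have : v ∉ S := by simp [hS, h2]
        simp [q', ind, this, h2] at h1
      have hih := ih q' hq' ?_ ?_
      · have e1 : ∑ v, deg w v * q v = ∑ v, deg w v * q' v + q a * vol w S := by
          rw [vol, ← sum_ind S, Finset.mul_sum, ← Finset.sum_add_distrib]
          exact Finset.sum_congr rfl fun v _ => by simp only [q']; ring
        have e2 : ∑ u, ∑ v, w u v * |q u - q v| = ∑ u, ∑ v, w u v * |q' u - q' v|
            + q a * ∑ u, ∑ v, w u v * (ind S u - ind S v) ^ 2 := by
          simp only [Finset.mul_sum, ← Finset.sum_add_distrib]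
          refine Finset.sum_congr rfl fun u _ => Finset.sum_congr rfl fun v _ => ?_
          have hu := hq' u
          have hv := hq' v
          have hu0 := hq'S u
          have hv0 := hq'S v
          by_cases h1 : u ∈ S <;> by_cases h2 : v ∈ S
          · simp [q', ind, h1, h2]
          · have : q v = 0 := hv0 h2
            simp only [q', ind, h1, h2, if_true, if_false, this, mul_one, mul_zero, sub_zero] at hu ⊢
            rw [abs_of_nonneg hu, abs_of_nonneg (hq u)]; ring
          · have : q u = 0 := hu0 h1
            simp only [q', ind, h1, h2, if_true, if_false, this, mul_one, mul_zero, sub_zero,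
              zero_sub, abs_neg] at hv ⊢
            rw [abs_of_nonneg hv, abs_of_nonneg (hq v)]; ring
          · simp [q', ind, h1, h2]
        have e3 := energy_ind hs S
        unfold energy at e3
        have e4 := hα S hne (fun v hv => by simpa [hS] using hv)
        rw [e1, e2]
        have e5 := mul_le_mul_of_nonneg_left e4 hapos.le
        rw [← e3] at e5
        linarith
      · have : univ.filter (fun v => q' v ≠ 0) ⊂ S := by
          rw [Finset.ssubset_iff_of_subset]
          · exact ⟨a, haS, by simp [q', ind, haS]⟩
          · intro v hv
            simp only [Finset.mem_filter, Finset.mem_univ, true_and] at hv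
            simp [hS, hsub v hv]
        have := Finset.card_lt_card this
        omega
      · intro T hT hT'
        exact hα T hT fun v hv => hsub v (hT' v hv)
    · refine ih q hq ?_ hα
      rw [Finset.not_nonempty_iff_eq_empty] at hne
      rw [← hS, hne]; simp

/-- Cheeger rounding. -/
lemma cheeger {w : V → V → ℝ} (hs : ∀ u v, w u v = w v u) (h0 : ∀ u v, 0 ≤ w u v)
    (ψ : V → ℝ) {R : ℝ} (hR : 0 ≤ R)
    (hm : 0 < ∑ v, deg w v * ψ v ^ 2) (hE : energy w ψ ≤ R * ∑ v, deg w v * ψ v ^ 2) {β : ℝ}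
    (hβ : √(2 * R) < β) :
    ∃ S : Finset V, S.Nonempty ∧ (∀ v ∈ S, ψ v ≠ 0) ∧ W w S Sᶜ ≤ β * vol w S := by
  by_contra! hcon
  set N := ∑ v, deg w v * ψ v ^ 2 with hN
  have h1 := coarea hs β _ (fun v => ψ v ^ 2) (fun v => sq_nonneg _) le_rfl
    (fun S hS hS' => (hcon S hS fun v hv => by simpa using hS' v hv).le)
  rw [← hN] at h1
  have hβ0 : 0 < β := lt_of_le_of_lt (Real.sqrt_nonneg _) hβ
  -- Cauchy-Schwarz
  have hCS : (∑ u, ∑ v, w u v * |ψ u ^ 2 - ψ v ^ 2|) ^ 2 ≤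
      (∑ u, ∑ v, w u v * (ψ u - ψ v) ^ 2) * (∑ u, ∑ v, w u v * (ψ u + ψ v) ^ 2) := by
    simp only [← Finset.sum_product', Finset.univ_product_univ]
    apply Finset.sum_sq_le_sum_mul_sum_of_sq_le_mul
    · intro p _; exact mul_nonneg (h0 _ _) (sq_nonneg _)
    · intro p _; exact mul_nonneg (h0 _ _) (sq_nonneg _)
    · intro p _
      rw [mul_pow, sq_abs]; apply le_of_eq; ring
  have hplus : ∑ u, ∑ v, w u v * (ψ u + ψ v) ^ 2 ≤ 4 * N := by
    have a1 : ∑ u, ∑ v, w u v * (ψ u + ψ v) ^ 2 + 2 * energy w ψ = 4 * N := by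
      have a2 := energy_eq hs ψ
      have a3 : ∑ u, ∑ v, w u v * (ψ u + ψ v) ^ 2 = 2 * energy w ψ
          + 4 * ∑ u, ∑ v, w u v * (ψ u * ψ v) := by
        unfold energy
        simp only [Finset.mul_sum, ← Finset.sum_add_distrib]
        exact Finset.sum_congr rfl fun u _ => Finset.sum_congr rfl fun v _ => by ring
      rw [← hN] at a2
      linarith
    have := energy_nonneg h0 ψ
    linarith
  have hEE : ∑ u, ∑ v, w u v * (ψ u - ψ v) ^ 2 ≤ 2 * (R * N) := by
    unfold energy at hE
    linarith
  have hCS2 : (∑ u, ∑ v, w u v * |ψ u ^ 2 - ψ v ^ 2|) ^ 2 ≤ (2 * (R * N)) * (4 * N) := by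
    refine hCS.trans (mul_le_mul hEE hplus ?_ (by positivity))
    exact Finset.sum_nonneg fun u _ => Finset.sum_nonneg fun v _ => mul_nonneg (h0 u v) (sq_nonneg _)
  have h2 : (2 * (β * N)) ^ 2 ≤ (2 * (R * N)) * (4 * N) := by
    refine le_trans ?_ hCS2
    apply pow_le_pow_left₀ (by positivity)
    linarith
  have h3 : 2 * R < β ^ 2 := by
    rw [← Real.sqrt_lt' hβ0]; exact hβ
  have : 0 < N ^ 2 := by positivity
  nlinarith

lemma cheeger' {w : V → V → ℝ} (hs : ∀ u v, w u v = w v u) (h0 : ∀ u v, 0 ≤ w u v)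
    (hd : ∀ v, 0 < deg w v)
    (ψ : V → ℝ) {R : ℝ} (hR : 0 ≤ R)
    (hm : 0 < ∑ v, deg w v * ψ v ^ 2) (hE : energy w ψ ≤ R * ∑ v, deg w v * ψ v ^ 2) :
    ∃ S : Finset V, S.Nonempty ∧ (∀ v ∈ S, ψ v ≠ 0) ∧ W w S Sᶜ ≤ √(2 * R) * vol w S := by
  classical
  let F : Finset (Finset V) := univ.filter (fun S => S.Nonempty ∧ ∀ v ∈ S, ψ v ≠ 0)
  have hF : F.Nonempty := by
    obtain ⟨S, h1, h2, _⟩ := cheeger hs h0 ψ hR hm hE (lt_add_one _)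
    exact ⟨S, by simp only [F, Finset.mem_filter, Finset.mem_univ, true_and]; exact ⟨h1, h2⟩⟩
  obtain ⟨S, hS, hmin⟩ := Finset.exists_min_image F (fun S => W w S Sᶜ / vol w S) hF
  have hS' : S.Nonempty ∧ ∀ v ∈ S, ψ v ≠ 0 := by
    simpa only [F, Finset.mem_filter, Finset.mem_univ, true_and] using hS
  refine ⟨S, hS'.1, hS'.2, ?_⟩
  rw [← div_le_iff₀ (vol_pos hd hS'.1)]
  refine le_of_forall_gt_imp_ge_of_dense fun β hβ => ?_
  obtain ⟨T, h1, h2, h3⟩ := cheeger hs h0 ψ hR hm hE hβ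
  refine (hmin T ?_).trans ?_
  · simp only [F, Finset.mem_filter, Finset.mem_univ, true_and]; exact ⟨h1, h2⟩
  · rwa [div_le_iff₀ (vol_pos hd h1)]

lemma pack {ι : Type} [DecidableEq ι] (a : ι → ℝ) {B : ℝ} (hB : 1 ≤ B)
    (ha : ∀ c, a c ≤ B) (m : ℕ) :
    ∀ s : Finset ι, (m : ℝ) * B - B + 1 / 2 ≤ ∑ c ∈ s, a c →
      ∃ T : Fin m → Finset ι, (∀ i j, i ≠ j → Disjoint (T i) (T j)) ∧ (∀ i, T i ⊆ s) ∧
        ∀ i, 1 / 2 ≤ ∑ c ∈ T i, a c := by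
  induction m with
  | zero => intro s _; exact ⟨fun _ => ∅, fun i => i.elim0, fun i => i.elim0, fun i => i.elim0⟩
  | succ m ih =>
    intro s hs
    push_cast at hs
    let F := s.powerset.filter (fun T => 1 / 2 ≤ ∑ c ∈ T, a c)
    have hF : F.Nonempty := ⟨s, by
      simp only [F, Finset.mem_filter, Finset.mem_powerset]
      refine ⟨subset_rfl, ?_⟩
      have : 0 ≤ (m : ℝ) * B := by positivity
      linarith⟩
    obtain ⟨T, hT, hmin⟩ := Finset.exists_min_image F Finset.card hF
    simp only [F, Finset.mem_filter, Finset.mem_powerset] at hT hmin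
    obtain ⟨hTs, hT2⟩ := hT
    have hTB : ∑ c ∈ T, a c ≤ B := by
      by_cases h : ∃ c ∈ T, 1 / 2 ≤ a c
      · obtain ⟨c, hc, hc2⟩ := h
        have h1 := hmin {c} ⟨by simpa using hTs hc, by simpa using hc2⟩
        have : T = {c} := (Finset.eq_of_subset_of_card_le (by simpa using hc) h1).symm
        rw [this]; simpa using ha c
      · push Not at h
        have hne : T.Nonempty := by
          by_contra hne
          rw [Finset.not_nonempty_iff_eq_empty] at hne
          rw [hne] at hT2
          norm_num at hT2
        obtain ⟨c, hc⟩ := hne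
        have h1 : ∑ c ∈ T.erase c, a c < 1 / 2 := by
          by_contra! hcon
          have := hmin (T.erase c) ⟨(Finset.erase_subset _ _).trans hTs, hcon⟩
          have := Finset.card_erase_lt_of_mem hc
          omega
        have h2 := Finset.add_sum_erase T a hc
        have := h c hc
        linarith
    have hsum : ∑ c ∈ s \ T, a c + ∑ c ∈ T, a c = ∑ c ∈ s, a c := Finset.sum_sdiff hTs
    obtain ⟨T', h1, h2, h3⟩ := ih (s \ T) (by linarith)
    have hdis : ∀ j, Disjoint T (T' j) := fun j =>
      Finset.disjoint_of_subset_right (h2 j) Finset.disjoint_sdiff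
    refine ⟨Fin.cons T T', ?_, ?_, ?_⟩
    · intro i j
      refine Fin.cases ?_ (fun i => ?_) i <;> refine Fin.cases ?_ (fun j => ?_) j
      · simp
      · intro _; simpa using hdis j
      · intro _; simpa using (hdis i).symm
      · intro hij; simpa using h1 i j (fun h => hij (by rw [h]))
    · intro i; refine Fin.cases ?_ (fun i => ?_) i
      · simpa using hTs
      · simpa using (h2 i).trans Finset.sdiff_subset
    · intro i; refine Fin.cases ?_ (fun i => ?_) i
      · simpa using hT2
      · simpa using h3 i

/-- distance to the integers -/
noncomputable def dZ (x : ℝ) : ℝ := |x - round x|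

lemma dZ_floor {x y : ℝ} (h : ⌊x⌋ ≠ ⌊y⌋) : dZ x + dZ y ≤ |x - y| := by
  wlog hlt : ⌊x⌋ < ⌊y⌋ generalizing x y
  · rw [add_comm, abs_sub_comm]
    exact this h.symm (lt_of_le_of_ne (not_lt.1 hlt) h.symm)
  have h1 : x < ⌊y⌋ := Int.floor_lt.1 hlt
  have h2 : (⌊y⌋ : ℝ) ≤ y := Int.floor_le y
  have h3 : dZ x ≤ |x - ⌊y⌋| := round_le x ⌊y⌋
  have h4 : dZ y ≤ |y - ⌊y⌋| := round_le y ⌊y⌋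
  rw [abs_of_neg (by linarith)] at h3
  rw [abs_of_nonneg (by linarith)] at h4
  rw [abs_of_neg (by linarith)]
  linarith

lemma grid {N : ℕ} (hN : 1 ≤ N) (y μ : V → ℝ) (hμ : ∀ v, 0 ≤ μ v) :
    ∃ t : ℝ, ∑ v ∈ univ.filter (fun v => dZ (y v - t) < 1 / (2 * N)), μ v ≤ (∑ v, μ v) / N := by
  classical
  have hN' : (0 : ℝ) < N := by exact_mod_cast hN
  have hsum : ∑ i ∈ Finset.range N,
      ∑ v ∈ univ.filter (fun v => dZ (y v - (i : ℝ) / N) < 1 / (2 * N)), μ v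
      ≤ ∑ _i ∈ Finset.range N, (∑ v, μ v) / N := by
    rw [Finset.sum_const, Finset.card_range, nsmul_eq_mul, mul_div_cancel₀ _ hN'.ne']
    simp only [Finset.sum_filter]
    rw [Finset.sum_comm]
    refine Finset.sum_le_sum fun v _ => ?_
    rw [← Finset.sum_filter, Finset.sum_const, nsmul_eq_mul]
    have hc : ((Finset.range N).filter
        (fun i : ℕ => dZ (y v - (i : ℝ) / N) < 1 / (2 * N))).card ≤ 1 := by
      rw [Finset.card_le_one]
      intro i hi j hj
      rw [Finset.mem_filter, Finset.mem_range] at hi hj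
      unfold dZ at hi hj
      obtain ⟨hi1, hi2⟩ := hi
      obtain ⟨hj1, hj2⟩ := hj
      generalize round (y v - (i : ℝ) / N) = p at hi2
      generalize round (y v - (j : ℝ) / N) = q at hj2
      have h1 : |(y v - (i : ℝ) / N - p) - (y v - (j : ℝ) / N - q)| < 1 / N := by
        refine (abs_sub _ _).trans_lt ?_
        have : (1 : ℝ) / N = 1 / (2 * N) + 1 / (2 * N) := by field_simp; norm_num
        linarith
      have h2 : (y v - (i : ℝ) / N - p) - (y v - (j : ℝ) / N - q)
          = (((j : ℤ) - i + N * (q - p) : ℤ) : ℝ) / N := by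
        push_cast; field_simp; ring
      rw [h2, abs_div, abs_of_pos hN', div_lt_div_iff_of_pos_right hN'] at h1
      have h3 : |((j : ℤ) - i + N * (q - p))| < 1 := by exact_mod_cast h1
      rw [Int.abs_lt_one_iff] at h3
      have h4 : (i : ℤ) ≡ j [ZMOD N] := by
        rw [Int.modEq_iff_dvd]
        exact ⟨p - q, by linarith⟩
      have h5 : i ≡ j [MOD N] := Int.natCast_modEq_iff.1 h4
      exact Nat.ModEq.eq_of_lt_of_lt h5 hi1 hj1
    have hc' : (((Finset.range N).filter
        (fun i : ℕ => dZ (y v - (i : ℝ) / N) < 1 / (2 * N))).card : ℝ) ≤ 1 := by exact_mod_cast hc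
    have := mul_le_mul_of_nonneg_right hc' (hμ v)
    linarith
  obtain ⟨i, _, hi⟩ := Finset.exists_le_of_sum_le (by simp; omega) hsum
  exact ⟨_, hi⟩

/-- radial projection -/
noncomputable def rad {m : ℕ} (x : EuclideanSpace ℝ (Fin m)) : EuclideanSpace ℝ (Fin m) :=
  ‖x‖⁻¹ • x

lemma norm_smul_rad {m : ℕ} (x : EuclideanSpace ℝ (Fin m)) : ‖x‖ • rad x = x := by
  by_cases h : x = 0
  · simp [h]
  · rw [rad, smul_smul, mul_inv_cancel₀ (norm_ne_zero_iff.2 h), one_smul]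

lemma norm_rad_le {m : ℕ} (x : EuclideanSpace ℝ (Fin m)) : ‖rad x‖ ≤ 1 := by
  by_cases h : x = 0
  · simp [h, rad]
  · rw [rad, norm_smul, norm_inv, norm_norm, inv_mul_cancel₀ (norm_ne_zero_iff.2 h)]

lemma norm_rad {m : ℕ} {x : EuclideanSpace ℝ (Fin m)} (h : x ≠ 0) : ‖rad x‖ = 1 := by
  rw [rad, norm_smul, norm_inv, norm_norm, inv_mul_cancel₀ (norm_ne_zero_iff.2 h)]

lemma norm_mul_rad_sub {m : ℕ} (x y : EuclideanSpace ℝ (Fin m)) :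
    ‖y‖ * ‖rad x - rad y‖ ≤ 2 * ‖x - y‖ := by
  have h1 : ‖y‖ • (rad x - rad y) = (‖y‖ - ‖x‖) • rad x + (x - y) := by
    rw [smul_sub, norm_smul_rad, sub_smul, norm_smul_rad]; abel
  have h2 : ‖y‖ * ‖rad x - rad y‖ = ‖‖y‖ • (rad x - rad y)‖ := by
    rw [norm_smul, norm_norm]
  rw [h2, h1]
  refine (norm_add_le _ _).trans ?_
  rw [norm_smul, Real.norm_eq_abs]
  have h3 : |‖y‖ - ‖x‖| ≤ ‖x - y‖ := by rw [norm_sub_rev]; exact abs_norm_sub_norm_le y x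
  have h4 := norm_rad_le x
  have h5 := mul_le_mul h3 h4 (norm_nonneg _) (norm_nonneg _)
  linarith

lemma clusters {m : ℕ} (hm : 1 ≤ m) (d : V → ℝ) (hd : ∀ v, 0 < d v)
    (F : V → EuclideanSpace ℝ (Fin m))
    (hiso : ∀ x, ∑ v, d v * (inner ℝ x (F v)) ^ 2 = ‖x‖ ^ 2)
    (htot : ∑ v, d v * ‖F v‖ ^ 2 = m) :
    ∃ K : Fin m → Finset V, (∀ i, 1 / 2 ≤ ∑ v ∈ K i, d v * ‖F v‖ ^ 2) ∧
      ∀ i j, i ≠ j → ∀ u ∈ K i, ∀ v ∈ K j, 1 / (8 * (m : ℝ) ^ 3) ≤ ‖rad (F u) - rad (F v)‖ := by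
  classical
  have hm1 : (1 : ℝ) ≤ m := by exact_mod_cast hm
  have hm0 : (0 : ℝ) < m := by linarith
  let μ : V → ℝ := fun v => d v * ‖F v‖ ^ 2
  have hμ : ∀ v, 0 ≤ μ v := fun v => mul_nonneg (hd v).le (sq_nonneg _)
  have hN : 1 ≤ 4 * m ^ 2 := by nlinarith
  choose t ht using fun j : Fin m => grid hN (fun v => 2 * m * rad (F v) j) μ hμ
  let Y : V → Fin m → ℝ := fun v j => 2 * m * rad (F v) j - t j
  let cell : V → Fin m → ℤ := fun v j => ⌊Y v j⌋
  let Pd : Finset V := univ.filter (fun v => ∀ j, 1 / (2 * ((4 * m ^ 2 : ℕ) : ℝ)) ≤ dZ (Y v j))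
  have hPdc : ∑ v ∈ Pdᶜ, μ v ≤ 1 / 4 := by
    calc ∑ v ∈ Pdᶜ, μ v ≤ ∑ v, ∑ j : Fin m,
            (if dZ (Y v j) < 1 / (2 * ((4 * m ^ 2 : ℕ) : ℝ)) then μ v else 0) := by
          have hnn : ∀ v, ∀ j : Fin m, 0 ≤
              (if dZ (Y v j) < 1 / (2 * ((4 * m ^ 2 : ℕ) : ℝ)) then μ v else 0) := by
            intro v j; split_ifs
            · exact hμ v
            · exact le_rfl
          refine le_trans (Finset.sum_le_sum (g := fun v => ∑ j : Fin m,
            (if dZ (Y v j) < 1 / (2 * ((4 * m ^ 2 : ℕ) : ℝ)) then μ v else 0)) ?_)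
            (Finset.sum_le_sum_of_subset_of_nonneg (Finset.subset_univ _)
              fun v _ _ => Finset.sum_nonneg fun j _ => hnn v j)
          intro v hv
          have hv' : ∃ j, dZ (Y v j) < 1 / (2 * ((4 * m ^ 2 : ℕ) : ℝ)) := by
            by_contra hc
            push Not at hc
            exact (Finset.mem_compl.1 hv) (Finset.mem_filter.2 ⟨Finset.mem_univ _, hc⟩)
          obtain ⟨j, hj⟩ := hv'
          have := Finset.single_le_sum (fun j _ => hnn v j) (Finset.mem_univ j)
          rwa [if_pos hj] at this
      _ = ∑ j : Fin m, ∑ v ∈ univ.filter (fun v => dZ (Y v j) < 1 / (2 * ((4 * m ^ 2 : ℕ) : ℝ))),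
            μ v := by
          rw [Finset.sum_comm]
          exact Finset.sum_congr rfl fun j _ => (Finset.sum_filter _ _).symm
      _ ≤ ∑ j : Fin m, (∑ v, μ v) / ((4 * m ^ 2 : ℕ) : ℝ) := Finset.sum_le_sum fun j _ => ht j
      _ = 1 / 4 := by
          rw [show ∑ v, μ v = m from htot]
          simp
          field_simp
  have hPd : (m : ℝ) - 1 / 4 ≤ ∑ v ∈ Pd, μ v := by
    have : ∑ v ∈ Pd, μ v + ∑ v ∈ Pdᶜ, μ v = m := by rw [Finset.sum_add_sum_compl]; exact htot
    linarith
  have hcell : ∀ u v j, cell u j = cell v j → |rad (F u) j - rad (F v) j| ≤ 1 / (2 * m) := by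
    intro u v j h
    have := Int.abs_sub_lt_one_of_floor_eq_floor h
    have e : Y u j - Y v j = (2 * m) * (rad (F u) j - rad (F v) j) := by simp only [Y]; ring
    rw [e, abs_mul, abs_of_pos (by positivity)] at this
    rw [le_div_iff₀ (by positivity)]
    linarith
  have hdiam : ∀ u v, cell u = cell v → ‖rad (F u) - rad (F v)‖ ^ 2 ≤ 1 / (4 * m) := by
    intro u v h
    rw [EuclideanSpace.norm_sq_eq]
    calc ∑ j, ‖(rad (F u) - rad (F v)) j‖ ^ 2 ≤ ∑ _j : Fin m, (1 / (2 * (m : ℝ))) ^ 2 := by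
          refine Finset.sum_le_sum fun j _ => ?_
          apply pow_le_pow_left₀ (norm_nonneg _)
          exact hcell u v j (congrFun h j)
      _ = 1 / (4 * m) := by
          simp; field_simp; norm_num
  let B : ℝ := 4 * m / (4 * m - 1)
  have h4m : (0 : ℝ) < 4 * m - 1 := by linarith
  have hB : 1 ≤ B := by
    simp only [B]; rw [le_div_iff₀ h4m]; linarith
  let a : (Fin m → ℤ) → ℝ := fun c => ∑ v ∈ Pd.filter (fun v => cell v = c), μ v
  have ha : ∀ c, a c ≤ B := by
    intro c
    by_cases h : ∃ u ∈ Pd.filter (fun v => cell v = c), F u ≠ 0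
    · obtain ⟨u, hu, hu0⟩ := h
      simp only [Finset.mem_filter] at hu
      have hpt : ∀ v ∈ Pd.filter (fun v => cell v = c),
          μ v * (1 - 1 / (4 * m)) ≤ d v * (inner ℝ (rad (F u)) (F v)) ^ 2 := by
        intro v hv
        simp only [Finset.mem_filter] at hv
        by_cases hv0 : F v = 0
        · simp [μ, hv0]
        have h1 := hdiam u v (hu.2.trans hv.2.symm)
        rw [norm_sub_sq_real, norm_rad hu0, norm_rad hv0] at h1
        have h2 : inner ℝ (rad (F u)) (F v) = ‖F v‖ * inner ℝ (rad (F u)) (rad (F v)) := by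
          conv_lhs => rw [← norm_smul_rad (F v)]
          rw [real_inner_smul_right]
        set z := inner ℝ (rad (F u)) (rad (F v))
        have h3 : 1 - 1 / (4 * (m : ℝ)) ≤ z ^ 2 := by nlinarith [sq_nonneg (z - 1)]
        rw [h2, mul_pow]
        have := mul_le_mul_of_nonneg_left h3 (hμ v)
        simp only [μ] at this ⊢
        linarith
      have hs1 : a c * (1 - 1 / (4 * m)) ≤ 1 := by
        simp only [a]
        rw [Finset.sum_mul]
        refine (Finset.sum_le_sum hpt).trans ?_
        have := hiso (rad (F u))
        rw [norm_rad hu0, one_pow] at this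
        rw [← this]
        exact Finset.sum_le_sum_of_subset_of_nonneg (Finset.subset_univ _)
          fun v _ _ => mul_nonneg (hd v).le (sq_nonneg _)
      simp only [B]
      rw [le_div_iff₀ h4m]
      have e : (4 * (m : ℝ) - 1) = (1 - 1 / (4 * m)) * (4 * m) := by field_simp
      rw [e, ← mul_assoc]
      have := mul_le_mul_of_nonneg_right hs1 (show 0 ≤ 4 * (m : ℝ) by positivity)
      linarith
    · push Not at h
      have : a c = 0 := Finset.sum_eq_zero fun v hv => by simp [μ, h v hv]
      rw [this]; linarith
  have hfib : ∀ T : Finset (Fin m → ℤ),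
      ∑ c ∈ T, a c = ∑ v ∈ Pd.filter (fun v => cell v ∈ T), μ v := by
    intro T
    rw [← Finset.sum_fiberwise_of_maps_to (t := T) (g := cell)
      (fun v hv => (Finset.mem_filter.1 hv).2)]
    refine Finset.sum_congr rfl fun c hc => ?_
    simp only [a]
    refine Finset.sum_congr ?_ fun _ _ => rfl
    ext v
    simp only [Finset.mem_filter]
    constructor
    · rintro ⟨h1, h2⟩; exact ⟨⟨h1, h2 ▸ hc⟩, h2⟩
    · rintro ⟨⟨h1, _⟩, h2⟩; exact ⟨h1, h2⟩
  obtain ⟨T, hT1, hT2, hT3⟩ := pack a hB ha m (univ.image cell) (by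
    rw [hfib]
    have : Pd.filter (fun v => cell v ∈ univ.image cell) = Pd := by
      apply Finset.filter_true_of_mem
      intro v _; exact Finset.mem_image_of_mem _ (Finset.mem_univ _)
    rw [this]
    refine le_trans ?_ hPd
    have hBe : B * (4 * m - 1) = 4 * m := by simp only [B]; field_simp
    have : ((m : ℝ) - 1) * (B - 1) ≤ 1 / 4 := by
      have e : B - 1 = 1 / (4 * m - 1) := by simp only [B]; field_simp; ring
      rw [e, mul_one_div, div_le_iff₀ h4m]; linarith
    linarith)
  refine ⟨fun i => Pd.filter (fun v => cell v ∈ T i), ?_, ?_⟩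
  · intro i; rw [← hfib]; exact hT3 i
  · intro i j hij u hu v hv
    rw [Finset.mem_filter] at hu hv
    have hne : cell u ≠ cell v := by
      intro h
      refine Finset.disjoint_left.1 (hT1 i j hij) hu.2 ?_
      rw [h]; exact hv.2
    obtain ⟨l, hl⟩ := Function.ne_iff.1 hne
    have h1 := dZ_floor hl
    have hu2 := (Finset.mem_filter.1 hu.1).2 l
    have hv2 := (Finset.mem_filter.1 hv.1).2 l
    have e : Y u l - Y v l = (2 * m) * (rad (F u) l - rad (F v) l) := by simp only [Y]; ring
    rw [e, abs_mul, abs_of_pos (by positivity)] at h1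
    have h2 : |rad (F u) l - rad (F v) l| ≤ ‖rad (F u) - rad (F v)‖ :=
      PiLp.norm_apply_le (rad (F u) - rad (F v)) l
    have h3 : 1 / (2 * ((4 * m ^ 2 : ℕ) : ℝ)) + 1 / (2 * ((4 * m ^ 2 : ℕ) : ℝ))
        = (2 * m) * (1 / (8 * (m : ℝ) ^ 3)) := by
      push_cast; field_simp; norm_num
    have h4 : (2 * (m : ℝ)) * (1 / (8 * (m : ℝ) ^ 3)) ≤ (2 * m) * ‖rad (F u) - rad (F v)‖ := by
      rw [← h3]
      refine (add_le_add hu2 hv2).trans (h1.trans ?_)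
      exact mul_le_mul_of_nonneg_left h2 (by positivity)
    exact le_of_mul_le_mul_left h4 (by positivity)

lemma hard {w : V → V → ℝ} (hs : ∀ u v, w u v = w v u) (h0 : ∀ u v, 0 ≤ w u v)
    (hd : ∀ v, 0 < deg w v) {m : ℕ} (hm : 1 ≤ m) (hmc : m ≤ Fintype.card V) :
    Q w m (66 * (m : ℝ) ^ 4 * √(lam w m)) := by
  classical
  obtain ⟨x, hort, -, hen, hmono⟩ := spectral (w := w) hs hd
  have hm1 : (1 : ℝ) ≤ m := by exact_mod_cast hm
  have hm0 : (0 : ℝ) < m := by linarith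
  let X : Fin m → V → ℝ := fun j => x (Fin.castLE hmc j)
  have hX : ∀ i j, ∑ v, deg w v * X i v * X j v = if i = j then 1 else 0 := by
    intro i j
    simp only [X]
    rw [hort]
    simp [Fin.ext_iff]
  have henX : ∀ j : Fin m, energy w (X j) = lam w (j + 1) := by
    intro j
    rw [hen]
    simp only [X]
    simp_rw [hort]
    simp
  have hlam : ∀ j : Fin m, lam w (j + 1) ≤ lam w m := by
    intro j
    have := hmono (a := Fin.castLE hmc j) (b := ⟨m - 1, by omega⟩) (by
      rw [Fin.le_def]; simp only [Fin.val_castLE]; omega)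
    simp only [Fin.val_castLE] at this
    rwa [Nat.sub_add_cancel hm] at this
  have hlam0 : 0 ≤ lam w m := by
    refine le_trans ?_ (hlam ⟨0, hm⟩)
    rw [← henX]; exact energy_nonneg h0 _
  let F : V → EuclideanSpace ℝ (Fin m) := fun v => WithLp.toLp 2 (fun j => X j v)
  have hF : ∀ v j, F v j = X j v := fun _ _ => rfl
  have hFn : ∀ v, ‖F v‖ ^ 2 = ∑ j, X j v ^ 2 := by
    intro v
    rw [EuclideanSpace.norm_sq_eq]
    simp [hF]
  have hiso : ∀ y, ∑ v, deg w v * (inner ℝ y (F v)) ^ 2 = ‖y‖ ^ 2 := by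
    intro y
    have h1 : ∀ v, deg w v * (inner ℝ y (F v)) ^ 2
        = ∑ i, ∑ j, y i * y j * (deg w v * X i v * X j v) := by
      intro v
      have : inner ℝ y (F v) = ∑ j, y j * X j v := by
        rw [PiLp.inner_apply]
        refine Finset.sum_congr rfl fun j _ => ?_
        simp [hF, mul_comm]
      rw [this, sq, Finset.sum_mul_sum, Finset.mul_sum]
      refine Finset.sum_congr rfl fun i _ => ?_
      rw [Finset.mul_sum]
      refine Finset.sum_congr rfl fun j _ => ?_
      ring
    simp_rw [h1]
    rw [Finset.sum_comm]
    have h2 : ∀ i, ∑ v, ∑ j, y i * y j * (deg w v * X i v * X j v) = y i ^ 2 := by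
      intro i
      rw [Finset.sum_comm]
      simp_rw [← Finset.mul_sum, hX]
      simp [sq]
    simp_rw [h2]
    rw [EuclideanSpace.norm_sq_eq]
    simp
  have htot : ∑ v, deg w v * ‖F v‖ ^ 2 = m := by
    simp_rw [hFn, Finset.mul_sum]
    rw [Finset.sum_comm]
    have : ∀ j, ∑ v, deg w v * X j v ^ 2 = 1 := by
      intro j
      have := hX j j
      rw [if_pos rfl] at this
      rw [← this]
      exact Finset.sum_congr rfl fun v _ => by ring
    simp_rw [this]
    simp
  obtain ⟨K, hK1, hK2⟩ := clusters hm (deg w) hd F hiso htot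
  have hKne : ∀ i, (K i).Nonempty := by
    intro i
    rw [Finset.nonempty_iff_ne_empty]
    intro h
    have := hK1 i
    rw [h] at this
    norm_num at this
  let L : ℝ := 16 * (m : ℝ) ^ 3
  have hL : 0 < L := by positivity
  let I : Fin m → Set (EuclideanSpace ℝ (Fin m)) := fun i => (fun v => rad (F v)) '' (K i : Set V)
  have hIne : ∀ i, (I i).Nonempty := fun i =>
    (Finset.coe_nonempty.2 (hKne i)).image _
  let D : Fin m → V → ℝ := fun i v => Metric.infDist (rad (F v)) (I i)
  let H : Fin m → V → ℝ := fun i v => max 0 (1 - L * D i v)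
  let ψ : Fin m → V → ℝ := fun i v => ‖F v‖ * H i v
  have hH0 : ∀ i v, 0 ≤ H i v := fun i v => le_max_left _ _
  have hH1 : ∀ i v, H i v ≤ 1 := by
    intro i v
    refine max_le zero_le_one ?_
    have : 0 ≤ L * D i v := mul_nonneg hL.le Metric.infDist_nonneg
    linarith
  have hHL : ∀ i u v, |H i u - H i v| ≤ L * ‖rad (F u) - rad (F v)‖ := by
    intro i u v
    have h1 : |D i u - D i v| ≤ ‖rad (F u) - rad (F v)‖ := by
      rw [← dist_eq_norm, abs_sub_le_iff]
      have a1 : D i u ≤ D i v + dist (rad (F u)) (rad (F v)) :=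
        Metric.infDist_le_infDist_add_dist
      have a2 : D i v ≤ D i u + dist (rad (F v)) (rad (F u)) :=
        Metric.infDist_le_infDist_add_dist
      rw [dist_comm] at a2
      constructor <;> linarith
    have h2 : |H i u - H i v| ≤ |(1 - L * D i u) - (1 - L * D i v)| := by
      simp only [H]
      have := abs_max_sub_max_le_max 0 (1 - L * D i u) 0 (1 - L * D i v)
      simpa using this
    refine h2.trans ?_
    rw [show (1 - L * D i u) - (1 - L * D i v) = L * -(D i u - D i v) by ring, abs_mul,
      abs_of_pos hL, abs_neg]
    exact mul_le_mul_of_nonneg_left h1 hL.le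
  have hψL : ∀ i u v, |ψ i u - ψ i v| ≤ 33 * (m : ℝ) ^ 3 * ‖F u - F v‖ := by
    intro i u v
    have e : ψ i u - ψ i v = (‖F u‖ - ‖F v‖) * H i u + ‖F v‖ * (H i u - H i v) := by
      simp only [ψ]; ring
    rw [e]
    refine (abs_add_le _ _).trans ?_
    rw [abs_mul, abs_mul, abs_of_nonneg (hH0 i u), abs_of_nonneg (norm_nonneg (F v))]
    have h1 : |‖F u‖ - ‖F v‖| * H i u ≤ ‖F u - F v‖ * 1 :=
      mul_le_mul (abs_norm_sub_norm_le _ _) (hH1 i u) (hH0 i u) (norm_nonneg _)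
    have h2 : ‖F v‖ * |H i u - H i v| ≤ ‖F v‖ * (L * ‖rad (F u) - rad (F v)‖) :=
      mul_le_mul_of_nonneg_left (hHL i u v) (norm_nonneg _)
    have h3 := mul_le_mul_of_nonneg_left (norm_mul_rad_sub (F u) (F v)) hL.le
    have h4 : (1 : ℝ) ≤ (m : ℝ) ^ 3 := one_le_pow₀ hm1
    have h5 := mul_le_mul_of_nonneg_right h4 (norm_nonneg (F u - F v))
    have h6 : L * (2 * ‖F u - F v‖) = 32 * ((m : ℝ) ^ 3 * ‖F u - F v‖) := by
      simp only [L]; ring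
    nlinarith
  let R : ℝ := 2 * ((33 * (m : ℝ) ^ 3) ^ 2 * (m * lam w m))
  have hR : 0 ≤ R := by positivity
  have hψm : ∀ i, 1 / 2 ≤ ∑ v, deg w v * ψ i v ^ 2 := by
    intro i
    refine (hK1 i).trans ?_
    refine le_trans (le_of_eq ?_) (Finset.sum_le_sum_of_subset_of_nonneg (Finset.subset_univ (K i))
      fun v _ _ => mul_nonneg (hd v).le (sq_nonneg _))
    refine Finset.sum_congr rfl fun v hv => ?_
    have : D i v = 0 := Metric.infDist_zero_of_mem ⟨v, hv, rfl⟩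
    have : H i v = 1 := by simp [H, this]
    simp [ψ, this]
  have hψE : ∀ i, energy w (ψ i) ≤ R * ∑ v, deg w v * ψ i v ^ 2 := by
    intro i
    have h1 : energy w (ψ i) ≤ (33 * (m : ℝ) ^ 3) ^ 2 * ∑ j, energy w (X j) := by
      have e : (33 * (m : ℝ) ^ 3) ^ 2 * ∑ j, energy w (X j)
          = (1 / 2) * ∑ u, ∑ v, w u v * ((33 * (m : ℝ) ^ 3) * ‖F u - F v‖) ^ 2 := by
        have e1 : ∀ u v, w u v * ((33 * (m : ℝ) ^ 3) * ‖F u - F v‖) ^ 2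
            = (33 * (m : ℝ) ^ 3) ^ 2 * ∑ j, w u v * (X j u - X j v) ^ 2 := by
          intro u v
          rw [mul_pow, EuclideanSpace.norm_sq_eq, ← Finset.mul_sum]
          simp only [PiLp.sub_apply, hF, Real.norm_eq_abs, sq_abs]
          ring
        simp_rw [e1, ← Finset.mul_sum, energy]
        rw [← Finset.mul_sum, mul_left_comm]
        congr 2
        rw [Finset.sum_comm]
        refine Finset.sum_congr rfl fun u _ => ?_
        rw [Finset.sum_comm]
        refine Finset.sum_congr rfl fun v _ => ?_
        rw [Finset.mul_sum]
      rw [e, energy]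
      refine mul_le_mul_of_nonneg_left ?_ (by norm_num)
      refine Finset.sum_le_sum fun u _ => Finset.sum_le_sum fun v _ => ?_
      refine mul_le_mul_of_nonneg_left ?_ (h0 u v)
      rw [← sq_abs]
      exact pow_le_pow_left₀ (abs_nonneg _) (hψL i u v) 2
    have h2 : ∑ j, energy w (X j) ≤ m * lam w m := by
      simp_rw [henX]
      refine (Finset.sum_le_sum fun j _ => hlam j).trans ?_
      simp
    have h3 := mul_le_mul_of_nonneg_left h2 (sq_nonneg (33 * (m : ℝ) ^ 3))
    have h4 := mul_le_mul_of_nonneg_left (hψm i) hR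
    have h5 : R * (1 / 2) = (33 * (m : ℝ) ^ 3) ^ 2 * (m * lam w m) := by simp only [R]; ring
    linarith
  have hsup : ∀ i j, i ≠ j → ∀ v, ψ i v ≠ 0 → ψ j v ≠ 0 → False := by
    have key : ∀ i v, ψ i v ≠ 0 → ∃ u ∈ K i, ‖rad (F v) - rad (F u)‖ < 1 / L := by
      intro i v h
      have h1 : H i v ≠ 0 := right_ne_zero_of_mul h
      have h2 : 0 < 1 - L * D i v := by
        by_contra hc
        exact h1 (max_eq_left (not_lt.1 hc))
      have h3 : D i v < 1 / L := by rw [lt_div_iff₀ hL]; linarith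
      obtain ⟨y, ⟨u, hu, rfl⟩, hy⟩ := (Metric.infDist_lt_iff (hIne i)).1 h3
      exact ⟨u, hu, by rwa [← dist_eq_norm]⟩
    intro i j hij v hi hj
    obtain ⟨u, hu, hu1⟩ := key i v hi
    obtain ⟨u', hu', hu1'⟩ := key j v hj
    have h1 := hK2 i j hij u hu u' hu'
    have h2 := norm_sub_le_norm_sub_add_norm_sub (rad (F u)) (rad (F v)) (rad (F u'))
    rw [norm_sub_rev (rad (F u)) (rad (F v))] at h2
    have h3 : 1 / L + 1 / L = 1 / (8 * (m : ℝ) ^ 3) := by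
      simp only [L]; field_simp; norm_num
    linarith
  choose S hS1 hS2 hS3 using fun i => cheeger' hs h0 hd (ψ i) hR
    (lt_of_lt_of_le (by norm_num) (hψm i)) (hψE i)
  refine ⟨S, hS1, ?_, ?_⟩
  · intro i j hij
    rw [Finset.disjoint_left]
    intro v hv hv'
    exact hsup i j hij v (hS2 i v hv) (hS2 j v hv')
  · intro i
    refine (hS3 i).trans (mul_le_mul_of_nonneg_right ?_
      (Finset.sum_nonneg fun v _ => (hd v).le))
    rw [show 66 * (m : ℝ) ^ 4 * √(lam w m) = √((66 * (m : ℝ) ^ 4) ^ 2 * lam w m) by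
      rw [Real.sqrt_mul (by positivity), Real.sqrt_sq (by positivity)]]
    apply Real.sqrt_le_sqrt
    have h7 : (m : ℝ) ^ 7 ≤ (m : ℝ) ^ 8 := pow_le_pow_right₀ hm1 (by norm_num)
    have := mul_le_mul_of_nonneg_right h7 hlam0
    simp only [R]
    nlinarith

lemma final {w : V → V → ℝ} (hs : ∀ u v, w u v = w v u) (h0 : ∀ u v, 0 ≤ w u v)
    (hd : ∀ v, 0 < deg w v) {k : ℕ} (hk : 2 ≤ k) (hpos : 0 < lam w k) :
    ∃ (ℓ : ℕ) (P : Fin ℓ → Finset V), 1 ≤ ℓ ∧ ℓ < k ∧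
          (∀ i, (P i).Nonempty) ∧
          (∀ i j, i ≠ j → Disjoint (P i) (P j)) ∧
          (∀ v : V, ∃ i, v ∈ P i) ∧
          (∀ i, inCondGE w (P i) (lam w k ^ 2 / (78400 * (k : ℝ) ^ 4)) ∧
            phi w (P i) ≤ 66 * (k : ℝ) ^ 6 * Real.sqrt (lam w (k - 1))) := by
  classical
  have hkc : k ≤ Fintype.card V := lam_pos_le_card (by omega) hpos
  have hk2 : (2 : ℝ) ≤ k := by exact_mod_cast hk
  have hk0 : (0 : ℝ) < k := by linarith
  have hez : ∀ r, Q w k r → lam w k ≤ 2 * r := by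
    obtain ⟨k', rfl⟩ : ∃ k', k = k' + 1 := ⟨k - 1, by omega⟩
    intro r hQ
    exact easy hs h0 hd hkc hQ
  set lk := lam w k with hlk
  have hl2 : lk ≤ 2 := by
    have hQ : Q w k 1 := by
      let e := (Fintype.equivFin V).symm
      refine ⟨fun i => {e (Fin.castLE hkc i)}, fun i => Finset.singleton_nonempty _, ?_, ?_⟩
      · intro i j hij
        rw [Finset.disjoint_singleton]
        intro h
        exact hij (Fin.castLE_injective hkc (e.injective h))
      · intro i
        rw [one_mul, vol_eq_W]
        exact W_mono_right h0 _ (Finset.subset_univ _)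
    have := hez 1 hQ
    linarith
  let t : ℕ → ℝ := fun j => lk / 8 * (1 + j / k)
  have htk : t k = lk / 4 := by simp only [t]; field_simp; norm_num
  have hNk : ¬ Q w k (t k) := by
    intro h
    have := hez _ h
    rw [htk] at this; linarith
  have hV : Nonempty V := Fintype.card_pos_iff.1 (by omega)
  have ht0 : ∀ j, 0 ≤ t j := fun j => by positivity
  have hQ1 : Q w 1 (t 1) := by
    refine ⟨fun _ => univ, fun _ => Finset.univ_nonempty, ?_, ?_⟩
    · intro i j hij; exact absurd (Subsingleton.elim i j) hij
    · intro i
      simp only [Finset.compl_univ, W, Finset.sum_empty, Finset.sum_const_zero]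
      exact mul_nonneg (ht0 1) (Finset.sum_nonneg fun v _ => (hd v).le)
  obtain ⟨ℓ, hℓ1, hℓk, hQℓ, hNℓ⟩ : ∃ ℓ, 1 ≤ ℓ ∧ ℓ < k ∧ Q w ℓ (t ℓ) ∧ ¬ Q w (ℓ + 1) (t (ℓ + 1)) := by
    by_contra hc
    push Not at hc
    have : ∀ j, 1 ≤ j → j ≤ k → Q w j (t j) := by
      intro j hj
      induction j, hj using Nat.le_induction with
      | base => intro _; exact hQ1
      | succ n hn ih => intro h; exact hc n hn (by omega) (ih (by omega))
    exact hNk (this k (by omega) le_rfl)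
  have hℓr : (1 : ℝ) ≤ ℓ := by exact_mod_cast hℓ1
  have hℓkr : (ℓ : ℝ) + 1 ≤ k := by exact_mod_cast hℓk
  have hkm : ((k - 1 : ℕ) : ℝ) ≤ k := by exact_mod_cast Nat.sub_le k 1
  let b : ℝ := 66 * ((k - 1 : ℕ) : ℝ) ^ 4 * √(lam w (k - 1))
  have hQb : Q w ℓ b := Q_mono_left (by omega) (hard hs h0 hd (by omega) (by omega))
  have hQm : Q w ℓ (min (t ℓ) b) := by
    rcases min_choice (t ℓ) b with h | h <;> rw [h] <;> assumption
  have hstep : t (ℓ + 1) - t ℓ = 2 * (lk / (16 * k)) := by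
    simp only [t]; push_cast; field_simp; ring
  have hρ1 : t (ℓ + 1) ≤ lk / 4 := by
    have : ((ℓ + 1 : ℕ) : ℝ) / k ≤ 1 := by
      rw [div_le_one hk0]; push_cast; exact hℓkr
    simp only [t]; nlinarith
  have hρ2 : lk / 8 ≤ t (ℓ + 1) := by
    have : 0 ≤ ((ℓ + 1 : ℕ) : ℝ) / k := by positivity
    simp only [t]; nlinarith
  obtain ⟨P, hP1, hP2, hP3, hP4⟩ := partition_thm hs h0 hd (ℓ := ℓ) (α := lk / (16 * k))
    (ρ := t (ℓ + 1)) (σ := min (t ℓ) b) hℓ1 (by positivity)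
    (by rw [div_le_one (by positivity)]; linarith) (ht0 _) (by linarith)
    (by have := min_le_left (t ℓ) b; linarith) hQm hNℓ
  refine ⟨ℓ, P, hℓ1, hℓk, hP1, hP2, hP3, fun i => ⟨?_, ?_⟩⟩
  · intro S h1 h2 h3 h4
    refine le_trans (mul_le_mul_of_nonneg_right ?_ ?_) ((hP4 i).1 S h1 h2 h3 h4)
    · have a1 : lk / (16 * k) * (lk / 8) / (3 * k) ≤ lk / (16 * k) * t (ℓ + 1) / (3 * ℓ) := by
        gcongr
      refine le_trans ?_ a1
      rw [div_mul_div_comm, div_div, ← sq]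
      apply div_le_div_of_nonneg_left (sq_nonneg _) (by positivity)
      have : (k : ℝ) ^ 2 ≤ (k : ℝ) ^ 4 := pow_le_pow_right₀ (by linarith) (by norm_num)
      nlinarith
    · exact Finset.sum_nonneg fun v _ => Finset.sum_nonneg fun u _ => h0 v u
  · refine (hP4 i).2.trans ?_
    have hs0 := Real.sqrt_nonneg (lam w (k - 1))
    calc (ℓ : ℝ) * min (t ℓ) b ≤ k * b := by
          have hb : 0 ≤ b := by positivity
          exact (mul_le_mul_of_nonneg_left (min_le_right _ _) (by positivity)).trans
            (mul_le_mul_of_nonneg_right (by linarith) hb)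
      _ ≤ k * (66 * (k : ℝ) ^ 4 * √(lam w (k - 1))) := by
          simp only [b]; gcongr
      _ = 66 * (k : ℝ) ^ 5 * √(lam w (k - 1)) := by ring
      _ ≤ 66 * (k : ℝ) ^ 6 * √(lam w (k - 1)) := by
          gcongr
          · linarith
          · norm_num

end S13

theorem stmt13 :
    ∃ C : ℝ, 0 < C ∧
      ∀ (V : Type) [Fintype V] [DecidableEq V] (w : V → V → ℝ),
        (∀ u v, w u v = w v u) → (∀ u v, 0 ≤ w u v) → (∀ v, 0 < deg w v) →
        ∀ k : ℕ, 2 ≤ k → 0 < lam w k →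
        ∃ (ℓ : ℕ) (P : Fin ℓ → Finset V), 1 ≤ ℓ ∧ ℓ < k ∧
          (∀ i, (P i).Nonempty) ∧
          (∀ i j, i ≠ j → Disjoint (P i) (P j)) ∧
          (∀ v : V, ∃ i, v ∈ P i) ∧
          (∀ i, inCondGE w (P i) (lam w k ^ 2 / (78400 * (k : ℝ) ^ 4)) ∧
            phi w (P i) ≤ C * (k : ℝ) ^ 6 * Real.sqrt (lam w (k - 1))) := by
  refine ⟨66, by norm_num, ?_⟩
  intro V _ _ w hs h0 hd k hk hpos
  exact S13.final hs h0 hd hk hpos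
end
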